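/- arXiv:math/0307262 — 3 statements merged into one kernel-verified Lean document; each statement's English description precedes it below -/
import Mathlib

section
/- Let n be a positive integer, 0 < α < n, and p ≤ (n+α)/(n−α). Suppose u is a positive function on ℝⁿ, continuous on ℝⁿ \ {x⁰}, unbounded in every neighborhood of x⁰, and satisfying u(x) = ∫_{ℝⁿ} |x−y|^{−(n−α)} u(y)^p dy for all x ≠ x⁰. Then u is radially symmetric about x⁰ and monotone decreasing in |x − x⁰|: if 0 < |x₁ − x⁰| ≤ |x₂ − x⁰| then u(x₁) ≥ u(x₂). -/
open MeasureTheory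

/-!
The proof is the method of moving spheres. Fix a centre `c` different from `x⁰`, and compare `u`
outside the sphere of radius `R` about `c` with its Kelvin transform. Folding the integral along
the sphere expresses `u - Kelvin u` as the integral over the exterior of a nonnegative kernel
against `u ^ p - Kelvin (u ^ p)`, and `Kelvin (u ^ p) ≤ (Kelvin u) ^ p` because `p` is at most
critical. If `u < Kelvin u` happens only on a set of small measure, the integrability of the
kernel makes the supremum of the failure at most half of itself, so it does not happen at all (the
narrow region principle). This shows `Kelvin u ≤ u` for small `R`, and lets the radius grow: by
the singularity `u - Kelvin u` is at least a multiple of `dist y c ^ (α - n)` away from the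
sphere, so for slightly larger spheres it can fail only in a thin shell. Hence `Kelvin u ≤ u` as
long as `x⁰` stays outside the sphere.

Any `y` closer to `x⁰` than `z` is the inversion of `z` in a sphere leaving `x⁰` outside, with
arbitrarily distant centre and ratio `R / dist y c` arbitrarily close to `1`; in the limit
`u z ≤ u y`.
-/

namespace MovingSpheres

open EuclideanGeometry Filter Metric Module Set Topology

section RealInequalities

variable {m M s : ℝ}

lemma exists_rpow_sub_rpow_le (hm : 0 < m) (M p : ℝ) :
    ∃ L > 0, ∀ x y, m ≤ x → x ≤ y → y ≤ M → y ^ p - x ^ p ≤ L * (y - x) := by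
  have hdiff : ContDiffOn ℝ 1 (fun x : ℝ => x ^ p) (Icc m M) := fun x hx =>
    (Real.contDiffAt_rpow_const_of_ne (hm.trans_le hx.1).ne').contDiffWithinAt
  obtain ⟨K, hK⟩ := hdiff.exists_lipschitzOnWith one_ne_zero (convex_Icc m M) isCompact_Icc
  refine ⟨K + 1, by positivity, fun x y hx hxy hy => ?_⟩
  have := hK.dist_le_mul y ⟨hx.trans hxy, hy⟩ x ⟨hx, hxy.trans hy⟩
  rw [Real.dist_eq, Real.dist_eq, abs_of_nonneg (sub_nonneg.2 hxy)] at this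
  nlinarith [le_abs_self (y ^ p - x ^ p)]

lemma eq_empty_of_forall_le_half {X : Type*} {V : Set X} {g : X → ℝ} (hpos : ∀ y ∈ V, 0 < g y)
    (hbdd : BddAbove (g '' V))
    (half : ∀ K, (∀ z ∈ V, g z ≤ K) → ∀ y ∈ V, g y ≤ K / 2) : V = ∅ := by
  by_contra hne
  obtain ⟨y, hy⟩ := nonempty_iff_ne_empty.2 hne
  have hle : ∀ z ∈ V, g z ≤ sSup (g '' V) := fun z hz => le_csSup hbdd (mem_image_of_mem g hz)
  have : sSup (g '' V) ≤ sSup (g '' V) / 2 :=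
    csSup_le ⟨_, mem_image_of_mem g hy⟩ (forall_mem_image.2 (half _ hle))
  linarith [hpos y hy, hle y hy]

lemma eventually_forall_div_rpow_mul_le {A r t : ℝ} (hs : 0 < s) (hA : 0 < A) (hr : 0 ≤ r)
    (hM : 0 ≤ M) (ht : 0 < t) :
    ∀ᶠ R in 𝓝[>] (0 : ℝ), ∀ D, t ≤ D → (R / D) ^ s * M ≤ A * (D + r) ^ (-s) := by
  have hlim : ∀ᶠ R in 𝓝[>] (0 : ℝ), (R * (1 + r / t)) ^ s * M < A := by
    have : ContinuousAt (fun R : ℝ => (R * (1 + r / t)) ^ s * M) 0 :=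
      ((continuousAt_id.mul_const _).rpow_const (.inr hs.le)).mul_const _
    exact nhdsWithin_le_nhds (this.eventually_lt_const (by simpa [Real.zero_rpow hs.ne'] using hA))
  filter_upwards [hlim, self_mem_nhdsWithin] with R hR hR₀ D hD
  have hR₀ : 0 < R := hR₀
  have hD₀ : 0 < D := ht.trans_le hD
  have hratio : R / D * (D + r) ≤ R * (1 + r / t) := by
    rw [div_mul_eq_mul_div, mul_div_assoc, add_div, div_self hD₀.ne']
    gcongr
  rw [Real.rpow_neg (by positivity), ← div_eq_mul_inv, le_div_iff₀ (by positivity)]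
  calc (R / D) ^ s * M * (D + r) ^ s = (R / D * (D + r)) ^ s * M := by
        rw [Real.mul_rpow (by positivity) (by positivity)]; ring
    _ ≤ (R * (1 + r / t)) ^ s * M := by gcongr
    _ ≤ A := hR.le

end RealInequalities

section Inversion

variable {V P : Type*} [NormedAddCommGroup V] [InnerProductSpace ℝ V] [MetricSpace P]
  [NormedAddTorsor V P] {c x₀ y z : P} {R R' : ℝ}

lemma dist_inversion_center_le (hR : 0 < R) (hy : R ≤ dist y c) :
    dist (inversion c R y) c ≤ R := by
  rw [dist_inversion_center, div_le_iff₀ (hR.trans_le hy)]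
  nlinarith

lemma inversion_ne_of_lt_dist (hR : 0 < R) (hR₀ : R < dist x₀ c) (hy : R ≤ dist y c) :
    inversion c R y ≠ x₀ := fun h =>
  (h ▸ dist_inversion_center_le hR hy).not_gt hR₀

lemma image_inversion_compl_closedBall (c : P) (hR : 0 < R) :
    inversion c R '' (closedBall c R)ᶜ = ball c R \ {c} := by
  rw [(inversion_involutive c hR.ne').image_eq_preimage_symm]
  ext z
  rcases eq_or_ne z c with rfl | hz
  · simp [hR.le]
  · have hz' : 0 < dist z c := dist_pos.2 hz
    simp only [mem_preimage, mem_compl_iff, mem_closedBall, not_le, dist_inversion_center,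
      lt_div_iff₀ hz', Set.mem_sdiff, mem_ball, mem_singleton_iff, hz, not_false_iff, and_true, sq,
      mul_lt_mul_iff_right₀ hR]

lemma sq_dist_center_mul_dist_inversion (R : ℝ) (hy : y ≠ c) (z : P) :
    (dist y c * dist (inversion c R y) z) ^ 2 =
      R ^ 2 * dist y z ^ 2 + (dist y c ^ 2 - R ^ 2) * (dist z c ^ 2 - R ^ 2) := by
  have hinv : dist (inversion c R y) z ^ 2 = (R / dist y c) ^ 4 * dist y c ^ 2
      - 2 * (R / dist y c) ^ 2 * inner ℝ (y -ᵥ c) (z -ᵥ c) + dist z c ^ 2 := by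
    rw [dist_eq_norm_vsub V _ z, ← vsub_sub_vsub_cancel_right _ z c, inversion_vsub_center,
      norm_sub_sq_real, norm_smul, real_inner_smul_left, Real.norm_of_nonneg (by positivity),
      dist_eq_norm_vsub V y, dist_eq_norm_vsub V z]
    ring
  have hdist : dist y z ^ 2 =
      dist y c ^ 2 - 2 * inner ℝ (y -ᵥ c) (z -ᵥ c) + dist z c ^ 2 := by
    rw [dist_eq_norm_vsub V y z, ← vsub_sub_vsub_cancel_right y z c, norm_sub_sq_real,
      dist_eq_norm_vsub V y, dist_eq_norm_vsub V z]
  have hyc : dist y c ≠ 0 := dist_ne_zero.2 hy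
  rw [mul_pow, hinv, hdist]
  field_simp
  ring

lemma dist_center_mul_dist_inversion_comm (R : ℝ) (hy : y ≠ c) (hz : z ≠ c) :
    dist y c * dist (inversion c R y) z = dist z c * dist (inversion c R z) y := by
  refine (sq_eq_sq₀ (by positivity) (by positivity)).1 ?_
  rw [sq_dist_center_mul_dist_inversion R hy, sq_dist_center_mul_dist_inversion R hz,
    dist_comm z y]
  ring

lemma dist_inversion_inversion_radius_le (hR : 0 < R) (hRR' : R ≤ R') (hy : R ≤ dist y c) :
    dist (inversion c R' y) (inversion c R y) ≤ (R' ^ 2 - R ^ 2) / R := by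
  have hyc : 0 < dist y c := hR.trans_le hy
  have hsq : 0 ≤ R' ^ 2 - R ^ 2 := by nlinarith
  calc dist (inversion c R' y) (inversion c R y)
      = ‖((R' ^ 2 - R ^ 2) / dist y c ^ 2) • (y -ᵥ c)‖ := by
        rw [dist_eq_norm_vsub V, ← vsub_sub_vsub_cancel_right _ _ c, inversion_vsub_center,
          inversion_vsub_center, ← sub_smul, div_pow, div_pow, ← sub_div]
    _ = (R' ^ 2 - R ^ 2) / dist y c := by
        rw [norm_smul, ← dist_eq_norm_vsub, Real.norm_of_nonneg (by positivity)]
        field_simp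
    _ ≤ (R' ^ 2 - R ^ 2) / R := by gcongr

/- The centre is the point at parameter `k = (1 - q²)⁻¹` on the line from `y` to `z`. -/
lemma exists_inversion_eq_of_dist_lt {q : ℝ} (hq₀ : 0 < q) (hq₁ : q < 1)
    (h : dist y x₀ < dist z x₀) :
    ∃ c : P, y ≠ c ∧ q * dist y c < dist x₀ c ∧ inversion c (q * dist y c) y = z := by
  have hq : 0 < 1 - q ^ 2 := by nlinarith
  obtain ⟨k, hk₀, hk⟩ : ∃ k : ℝ, 0 < k ∧ k * (1 - q ^ 2) = 1 :=
    ⟨_, inv_pos.2 hq, inv_mul_cancel₀ hq.ne'⟩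
  have hyz : y ≠ z := by rintro rfl; exact h.false
  set c : P := AffineMap.lineMap y z k with hc
  have hyc : dist y c = k * dist y z := by
    rw [hc, dist_left_lineMap, Real.norm_of_nonneg hk₀.le]
  have hyc₀ : dist y c ≠ 0 := hyc ▸ mul_ne_zero hk₀.ne' (dist_ne_zero.2 hyz)
  refine ⟨c, dist_ne_zero.1 hyc₀, lt_of_pow_lt_pow_left₀ 2 dist_nonneg ?_, ?_⟩
  · have hpow : dist x₀ c ^ 2 - (q * dist y c) ^ 2 =
        dist y x₀ ^ 2 + k * (dist z x₀ ^ 2 - dist y x₀ ^ 2) := by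
      have hcx : c -ᵥ x₀ = y -ᵥ x₀ + k • (z -ᵥ y) := by
        rw [hc, AffineMap.lineMap_apply, vadd_vsub_assoc, add_comm]
      have hzx : z -ᵥ x₀ = y -ᵥ x₀ + (z -ᵥ y) := by rw [add_comm, vsub_add_vsub_cancel]
      rw [hyc, dist_comm x₀, dist_comm y z, dist_eq_norm_vsub V c, dist_eq_norm_vsub V z x₀,
        dist_eq_norm_vsub V y, dist_eq_norm_vsub V z y, hcx, hzx, norm_add_sq_real,
        norm_add_sq_real, norm_smul, real_inner_smul_right, Real.norm_of_nonneg hk₀.le]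
      linear_combination (k * ‖z -ᵥ y‖ ^ 2) * hk
    have hlt : dist y x₀ ^ 2 < dist z x₀ ^ 2 := by gcongr
    nlinarith [sq_nonneg (dist y x₀), mul_pos hk₀ (sub_pos.2 hlt)]
  · rw [inversion, mul_div_cancel_right₀ q hyc₀, eq_comm, eq_vadd_iff_vsub_eq, hc,
      AffineMap.left_vsub_lineMap, AffineMap.right_vsub_lineMap, smul_smul,
      ← neg_vsub_eq_vsub_rev z y, smul_neg, ← neg_smul]
    congr 1
    linear_combination -hk

end Inversion

section Kelvin

variable {V P : Type*} [NormedAddCommGroup V] [InnerProductSpace ℝ V] [MetricSpace P]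
  [NormedAddTorsor V P] {c y z : P} {R R' s M : ℝ} {u : P → ℝ}

/-- The Kelvin transform of `u` of degree `s` in the sphere of centre `c` and radius `R`. Degree
`n - α` is the one adapted to solutions of the integral equation, degree `n + α` to its
right-hand side. -/
noncomputable def kelvinTransform (s : ℝ) (c : P) (R : ℝ) (u : P → ℝ) (y : P) : ℝ :=
  (R / dist y c) ^ s * u (inversion c R y)

/-- The kernel `dist y z ^ (-s)` minus its Kelvin transform in `y`: the method of moving spheres
writes the difference between a Riesz potential and its Kelvin transform through this kernel. -/
noncomputable def kelvinKernel (s : ℝ) (c : P) (R : ℝ) (y z : P) : ℝ :=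
  dist y z ^ (-s) - kelvinTransform s c R (fun x => dist x z ^ (-s)) y

lemma kelvinTransform_of_dist_eq (hR : 0 < R) (hy : dist y c = R) :
    kelvinTransform s c R u y = u y := by
  rw [kelvinTransform, inversion_of_mem_sphere hy, hy, div_self hR.ne', Real.one_rpow, one_mul]

lemma rpow_dist_mul_kelvinTransform (hR : 0 < R) (hy : R ≤ dist y c) :
    dist y c ^ s * kelvinTransform s c R u y = R ^ s * u (inversion c R y) := by
  have hyc : 0 < dist y c := hR.trans_le hy
  rw [kelvinTransform, Real.div_rpow hR.le hyc.le]
  field_simp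

lemma kelvinTransform_pos (hR : 0 < R) (hy : R ≤ dist y c) (hu : 0 < u (inversion c R y)) :
    0 < kelvinTransform s c R u y := by
  have hyc : 0 < dist y c := hR.trans_le hy
  rw [kelvinTransform]
  positivity

lemma kelvinTransform_le_mul (hR : 0 < R) (hRR' : R ≤ R')
    (hM : ∀ z ∈ closedBall c R', u z ≤ M) (hy : R ≤ dist y c) :
    kelvinTransform s c R u y ≤ (R / dist y c) ^ s * M := by
  rw [kelvinTransform]
  gcongr
  exact hM _ ((dist_inversion_center_le hR hy).trans hRR')

lemma kelvinTransform_le (hs : 0 ≤ s) (hM₀ : 0 ≤ M) (hR : 0 < R) (hRR' : R ≤ R')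
    (hM : ∀ z ∈ closedBall c R', u z ≤ M) (hy : R ≤ dist y c) :
    kelvinTransform s c R u y ≤ M :=
  (kelvinTransform_le_mul hR hRR' hM hy).trans <| mul_le_of_le_one_left hM₀ <|
    Real.rpow_le_one (by positivity) ((div_le_one (hR.trans_le hy)).2 hy) hs

lemma kelvinTransform_rpow_le {p t : ℝ} (hst : p * s ≤ t) (hR : 0 < R) (hy : R ≤ dist y c)
    (hu : 0 < u (inversion c R y)) :
    kelvinTransform t c R (fun x => u x ^ p) y ≤ kelvinTransform s c R u y ^ p := by
  have hyc : 0 < dist y c := hR.trans_le hy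
  rw [kelvinTransform, kelvinTransform, Real.mul_rpow (by positivity) hu.le,
    ← Real.rpow_mul (by positivity), mul_comm s]
  refine mul_le_mul_of_nonneg_right ?_ (by positivity)
  exact Real.rpow_le_rpow_of_exponent_ge (by positivity) ((div_le_one hyc).2 hy) hst

lemma kelvinTransform_mul (s t : ℝ) (hR : 0 < R) (hy : y ≠ c) (f g : P → ℝ) :
    kelvinTransform (s + t) c R (fun z => f z * g z) y =
      kelvinTransform s c R f y * kelvinTransform t c R g y := by
  have hyc : 0 < dist y c := dist_pos.2 hy
  rw [kelvinTransform, Real.rpow_add (by positivity), mul_mul_mul_comm, kelvinTransform,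
    kelvinTransform]

lemma continuousAt_kelvinTransform_radius (hR : R ≠ 0) (hy : y ≠ c)
    (hu : ContinuousAt u (inversion c R y)) :
    ContinuousAt (fun R => kelvinTransform s c R u y) R := by
  have hinv : ContinuousAt (fun R => inversion c R y) R := by
    simp only [inversion]
    fun_prop
  refine ContinuousAt.mul (ContinuousAt.rpow_const (by fun_prop) (Or.inl ?_)) ?_
  · exact div_ne_zero hR (dist_ne_zero.2 hy)
  · exact ContinuousAt.comp (f := fun R => inversion c R y) hu hinv

lemma kelvinTransform_dist_rpow_neg (s : ℝ) (hR : 0 < R) (hy : y ≠ c) (z : P) :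
    kelvinTransform s c R (fun x => dist x z ^ (-s)) y =
      (dist y c * dist (inversion c R y) z / R) ^ (-s) := by
  have hyc : 0 < dist y c := dist_pos.2 hy
  rw [mul_div_right_comm, ← inv_div, Real.mul_rpow (by positivity) (by positivity),
    Real.inv_rpow (by positivity), Real.rpow_neg (by positivity) s, inv_inv, kelvinTransform]

lemma kelvinTransform_kelvinKernel (s : ℝ) (hR : 0 < R) (hy : y ≠ c) (hz : z ≠ c) :
    kelvinTransform s c R (kelvinKernel s c R y) z = -kelvinKernel s c R y z := by
  have hyc : 0 < dist y c := dist_pos.2 hy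
  have hzc : 0 < dist z c := dist_pos.2 hz
  have hsymm : (R / dist z c) ^ s * dist y (inversion c R z) ^ (-s) =
      kelvinTransform s c R (fun x => dist x z ^ (-s)) y := by
    rw [kelvinTransform_dist_rpow_neg s hR hy, dist_center_mul_dist_inversion_comm R hy hz,
      ← kelvinTransform_dist_rpow_neg s hR hz, dist_comm y, kelvinTransform]
  have hinvol : (R / dist z c) ^ s *
      kelvinTransform s c R (fun x => dist x (inversion c R z) ^ (-s)) y = dist y z ^ (-s) := by
    have : dist y c * dist (inversion c R y) (inversion c R z) / R =
        R / dist z c * dist y z := by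
      rw [dist_inversion_inversion hy hz]
      field_simp
    rw [kelvinTransform_dist_rpow_neg s hR hy, this, Real.mul_rpow (by positivity) dist_nonneg,
      Real.rpow_neg (by positivity) s, mul_inv_cancel_left₀ (by positivity)]
  rw [kelvinTransform, kelvinKernel, mul_sub, hsymm, hinvol, kelvinKernel, neg_sub]

lemma kelvinKernel_le (s : ℝ) (hR : 0 ≤ R) (c y z : P) :
    kelvinKernel s c R y z ≤ dist y z ^ (-s) := by
  rw [kelvinKernel, kelvinTransform]
  exact sub_le_self _ (by positivity)

lemma kelvinKernel_nonneg (hs : 0 ≤ s) (hR : 0 < R) (hy : R ≤ dist y c) (hz : R ≤ dist z c)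
    (hyz : y ≠ z) : 0 ≤ kelvinKernel s c R y z := by
  have hyc : y ≠ c := dist_pos.1 (hR.trans_le hy)
  rw [kelvinKernel, kelvinTransform_dist_rpow_neg s hR hyc, sub_nonneg]
  refine Real.rpow_le_rpow_of_nonpos (dist_pos.2 hyz) ?_ (neg_nonpos.2 hs)
  rw [le_div_iff₀ hR]
  refine (sq_le_sq₀ (by positivity) (by positivity)).1 ?_
  have : 0 ≤ (dist y c ^ 2 - R ^ 2) * (dist z c ^ 2 - R ^ 2) :=
    mul_nonneg (by nlinarith) (by nlinarith)
  rw [sq_dist_center_mul_dist_inversion R hyc]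
  nlinarith

lemma dist_le_mul_dist_center {r₁ r₃ : ℝ} (hr₁ : 0 < r₁) (hy : r₁ ≤ dist y c)
    (hz : dist z c ≤ r₃) : dist y z ≤ (1 + r₃ / r₁) * dist y c := by
  have : r₃ ≤ r₃ / r₁ * dist y c := by
    rw [div_mul_eq_mul_div, le_div_iff₀ hr₁]
    have := dist_nonneg.trans hz
    gcongr
  linarith [dist_triangle_right y z c]

lemma mul_sq_dist_center_le {r₁ r₂ : ℝ} (hR : 0 < R) (h₁ : R < r₁) (hy : r₁ ≤ dist y c)
    (h₂ : R ≤ r₂) (hz : r₂ ≤ dist z c) :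
    (1 - R ^ 2 / r₁ ^ 2) * (r₂ ^ 2 - R ^ 2) * dist y c ^ 2 ≤
      (dist y c ^ 2 - R ^ 2) * (dist z c ^ 2 - R ^ 2) := by
  have hr₁ : 0 < r₁ := hR.trans h₁
  have hyR : (1 - R ^ 2 / r₁ ^ 2) * dist y c ^ 2 ≤ dist y c ^ 2 - R ^ 2 := by
    have : R ^ 2 ≤ R ^ 2 / r₁ ^ 2 * dist y c ^ 2 := by
      rw [div_mul_eq_mul_div, le_div_iff₀ (by positivity)]
      gcongr
    linarith
  calc (1 - R ^ 2 / r₁ ^ 2) * (r₂ ^ 2 - R ^ 2) * dist y c ^ 2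
      = (1 - R ^ 2 / r₁ ^ 2) * dist y c ^ 2 * (r₂ ^ 2 - R ^ 2) := by ring
    _ ≤ (dist y c ^ 2 - R ^ 2) * (dist z c ^ 2 - R ^ 2) := by
      refine mul_le_mul hyR ?_ ?_ ?_ <;> nlinarith

/- Since `dist y z ≤ C * dist y c`, the increment in `sq_dist_center_mul_dist_inversion` is at
least a fixed multiple of `dist y z ^ 2`. -/
lemma exists_mul_dist_le_dist_center_mul_dist_inversion (c : P) {r₁ r₂ r₃ : ℝ}
    (hR : 0 < R) (h₁ : R < r₁) (h₂ : R < r₂) (h₃ : r₂ ≤ r₃) :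
    ∃ θ > 1, ∀ y z : P, r₁ ≤ dist y c → r₂ ≤ dist z c → dist z c ≤ r₃ →
      θ * dist y z ≤ dist y c * dist (inversion c R y) z / R := by
  have hr₁ : 0 < r₁ := hR.trans h₁
  have hr₃ : 0 < r₃ := (hR.trans h₂).trans_le h₃
  set C := 1 + r₃ / r₁
  set κ := (1 - R ^ 2 / r₁ ^ 2) * (r₂ ^ 2 - R ^ 2)
  have hκ₀ : 0 < κ := by
    refine mul_pos (sub_pos.2 ((div_lt_one (by positivity)).2 ?_)) (sub_pos.2 ?_) <;> gcongr
  have hθ : 1 < √(1 + κ / (R * C) ^ 2) := by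
    rw [Real.lt_sqrt zero_le_one, one_pow, lt_add_iff_pos_right]
    positivity
  refine ⟨_, hθ, fun y z hy hz hz₃ => ?_⟩
  have hyc : 0 < dist y c := hr₁.trans_le hy
  have hyz : dist y z ≤ C * dist y c := dist_le_mul_dist_center hr₁ hy hz₃
  rw [le_div_iff₀ hR]
  refine (sq_le_sq₀ (by positivity) (by positivity)).1 ?_
  calc (√(1 + κ / (R * C) ^ 2) * dist y z * R) ^ 2
      = R ^ 2 * dist y z ^ 2 + κ * (dist y z / C) ^ 2 := by
        rw [mul_pow, mul_pow, Real.sq_sqrt (by positivity)]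
        field_simp
    _ ≤ R ^ 2 * dist y z ^ 2 + κ * dist y c ^ 2 := by
        gcongr
        exact div_le_of_le_mul₀ (by positivity) hyc.le (by rwa [mul_comm])
    _ ≤ R ^ 2 * dist y z ^ 2 + (dist y c ^ 2 - R ^ 2) * (dist z c ^ 2 - R ^ 2) :=
        add_le_add_right (mul_sq_dist_center_le hR h₁ hy h₂.le hz) _
    _ = (dist y c * dist (inversion c R y) z) ^ 2 :=
        (sq_dist_center_mul_dist_inversion R (dist_pos.1 hyc) z).symm

lemma exists_le_rpow_dist_mul_kelvinKernel (c : P) (hs : 0 < s) {r₁ r₂ r₃ : ℝ} (hR : 0 < R)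
    (h₁ : R < r₁) (h₂ : R < r₂) (h₃ : r₂ ≤ r₃) :
    ∃ k > 0, ∀ y z : P, r₁ ≤ dist y c → r₂ ≤ dist z c → dist z c ≤ r₃ → y ≠ z →
      k ≤ dist y c ^ s * kelvinKernel s c R y z := by
  obtain ⟨θ, hθ, hθle⟩ := exists_mul_dist_le_dist_center_mul_dist_inversion c hR h₁ h₂ h₃
  have hr₁ : 0 < r₁ := hR.trans h₁
  have hr₃ : 0 < r₃ := (hR.trans h₂).trans_le h₃
  have hθs : θ ^ (-s) < 1 := Real.rpow_lt_one_of_one_lt_of_neg hθ (neg_neg_of_pos hs)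
  refine ⟨(1 + r₃ / r₁) ^ (-s) * (1 - θ ^ (-s)),
    mul_pos (by positivity) (sub_pos.2 hθs), fun y z hy hz hz₃ hyz => ?_⟩
  have hyc : 0 < dist y c := hr₁.trans_le hy
  have hyz₀ : 0 < dist y z := dist_pos.2 hyz
  have hkernel : (1 - θ ^ (-s)) * dist y z ^ (-s) ≤ kelvinKernel s c R y z := by
    rw [kelvinKernel, kelvinTransform_dist_rpow_neg s hR (dist_pos.1 hyc), sub_mul, one_mul,
      ← Real.mul_rpow (by positivity) hyz₀.le]
    exact sub_le_sub_left (Real.rpow_le_rpow_of_nonpos (by positivity)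
      (hθle y z hy hz hz₃) (neg_nonpos.2 hs.le)) _
  have hfactor : (1 + r₃ / r₁) ^ (-s) ≤ dist y c ^ s * dist y z ^ (-s) := by
    have := Real.rpow_le_rpow_of_nonpos hyz₀
      (dist_le_mul_dist_center hr₁ hy hz₃) (neg_nonpos.2 hs.le)
    rw [Real.mul_rpow (by positivity) hyc.le, Real.rpow_neg hyc.le, ← div_eq_mul_inv,
      div_le_iff₀' (by positivity)] at this
    exact this
  calc (1 + r₃ / r₁) ^ (-s) * (1 - θ ^ (-s))
      ≤ dist y c ^ s * dist y z ^ (-s) * (1 - θ ^ (-s)) :=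
        mul_le_mul_of_nonneg_right hfactor (sub_nonneg.2 hθs.le)
    _ = dist y c ^ s * ((1 - θ ^ (-s)) * dist y z ^ (-s)) := by ring
    _ ≤ dist y c ^ s * kelvinKernel s c R y z := by gcongr

lemma eventually_forall_mul_kelvinTransform_lt_add [ProperSpace P] (s : ℝ) {R₁ e : ℝ}
    (hR : 0 < R) (hR₁ : R < R₁) (hu : ContinuousOn u (closedBall c R₁)) (he : 0 < e) :
    ∀ᶠ R' in 𝓝[>] R, ∀ y, R' ≤ dist y c →
      dist y c ^ s * kelvinTransform s c R' u y < dist y c ^ s * kelvinTransform s c R u y + e := by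
  obtain ⟨M, hM⟩ := ((isCompact_closedBall c R₁).image_of_continuousOn hu).isBounded.exists_norm_le
  have hRs : 0 < R ^ s := by positivity
  obtain ⟨δ, hδ₀, hδ⟩ := Metric.uniformContinuousOn_iff.1
    ((isCompact_closedBall c R₁).uniformContinuousOn_of_continuous hu) (e / 2 / R ^ s)
    (by positivity)
  have hpow : ∀ᶠ R' in 𝓝 R, |R' ^ s - R ^ s| * M < e / 2 := by
    have : ContinuousAt (fun R' : ℝ => |R' ^ s - R ^ s| * M) R :=
      (((Real.continuousAt_rpow_const R s (.inl hR.ne')).sub continuousAt_const).abs).mul_const _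
    exact this.eventually_lt_const (by simpa using he)
  have hdist : ∀ᶠ R' in 𝓝 R, (R' ^ 2 - R ^ 2) / R < δ := by
    have : Continuous (fun R' : ℝ => (R' ^ 2 - R ^ 2) / R) := by fun_prop
    exact this.continuousAt.eventually_lt_const (by simpa using hδ₀)
  filter_upwards [nhdsWithin_le_nhds hpow, nhdsWithin_le_nhds hdist,
    nhdsWithin_le_nhds (eventually_lt_nhds hR₁), self_mem_nhdsWithin]
    with R' hpow hdist hR'₁ hRR' y hy
  rw [mem_Ioi] at hRR'
  have hR' : 0 < R' := hR.trans hRR'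
  have hy' : R ≤ dist y c := hRR'.le.trans hy
  have hmem' : inversion c R' y ∈ closedBall c R₁ := (dist_inversion_center_le hR' hy).trans hR'₁.le
  have hmem : inversion c R y ∈ closedBall c R₁ := (dist_inversion_center_le hR hy').trans hR₁.le
  have hclose := hδ _ hmem' _ hmem
    ((dist_inversion_inversion_radius_le hR hRR'.le hy').trans_lt hdist)
  rw [Real.dist_eq, lt_div_iff₀ hRs] at hclose
  rw [rpow_dist_mul_kelvinTransform hR' hy, rpow_dist_mul_kelvinTransform hR hy']
  have hfactor : (R' ^ s - R ^ s) * u (inversion c R' y) ≤ |R' ^ s - R ^ s| * M :=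
    (le_abs_self _).trans <| (abs_mul _ _).trans_le <|
      mul_le_mul_of_nonneg_left (hM _ (mem_image_of_mem u hmem')) (abs_nonneg _)
  have := mul_le_mul_of_nonneg_right
    (le_abs_self (u (inversion c R' y) - u (inversion c R y))) hRs.le
  linarith

end Kelvin

section Folding

/-- The Riesz potential of `f` of order `n - s` on an `n`-dimensional space, without the usual
normalizing constant. -/
noncomputable def rieszPotential {X : Type*} [PseudoMetricSpace X] [MeasurableSpace X]
    (μ : Measure X) (s : ℝ) (f : X → ℝ) (y : X) : ℝ :=
  ∫ z, dist y z ^ (-s) * f z ∂μ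

variable {E : Type*} [NormedAddCommGroup E] [InnerProductSpace ℝ E] {c y : E} {R s : ℝ}
  {f : E → ℝ}

lemma hasFDerivWithinAt_inversion_compl_closedBall (hR : 0 ≤ R) :
    ∀ z ∈ (closedBall c R)ᶜ, HasFDerivWithinAt (inversion c R)
      ((R / dist z c) ^ 2 • ((ℝ ∙ (z - c))ᗮ.reflection : E →L[ℝ] E)) (closedBall c R)ᶜ z :=
  fun _ hz => (hasFDerivAt_inversion
    (ne_of_mem_of_not_mem (mem_closedBall_self hR) hz).symm).hasFDerivWithinAt

lemma kelvinKernel_mul_add_kelvinTransform (hR : 0 < R) (hy : y ≠ c) (f : E → ℝ) :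
    EqOn (fun z => kelvinKernel s c R y z * f z +
        kelvinTransform (2 * finrank ℝ E) c R (fun z => kelvinKernel s c R y z * f z) z)
      (fun z => kelvinKernel s c R y z *
        (f z - kelvinTransform (2 * finrank ℝ E - s) c R f z)) (closedBall c R)ᶜ := by
  intro z hzR
  have hz : z ≠ c := (ne_of_mem_of_not_mem (mem_closedBall_self hR.le) hzR).symm
  have hmul := kelvinTransform_mul s (2 * finrank ℝ E - s) hR hz (kelvinKernel s c R y) f
  rw [add_sub_cancel, kelvinTransform_kelvinKernel s hR hy hz] at hmul
  simp only [hmul]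
  ring

lemma integrable_kelvinKernel_mul [MeasurableSpace E] {μ : Measure E}
    (hfy : Integrable (fun z => dist y z ^ (-s) * f z) μ)
    (hfi : Integrable (fun z => dist (inversion c R y) z ^ (-s) * f z) μ) :
    Integrable (fun z => kelvinKernel s c R y z * f z) μ := by
  simp only [kelvinKernel, kelvinTransform, sub_mul, mul_assoc]
  exact hfy.sub (hfi.const_mul _)

variable [FiniteDimensional ℝ E]

lemma abs_det_smul_reflection (a : ℝ) (K : Submodule ℝ E) :
    |(a • (K.reflection : E →L[ℝ] E)).det| = |a| ^ finrank ℝ E := by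
  have hdet : (K.reflection : E →L[ℝ] E).det = (-1) ^ finrank ℝ Kᗮ := K.det_reflection
  rw [ContinuousLinearMap.det, ContinuousLinearMap.toLinearMap_smul, LinearMap.det_smul,
    ← ContinuousLinearMap.det, hdet, abs_mul, abs_pow, abs_pow, abs_neg, abs_one, one_pow,
    mul_one]

lemma abs_det_fderiv_inversion_smul (c : E) (R : ℝ) (f : E → ℝ) (z : E) :
    |((R / dist z c) ^ 2 • ((ℝ ∙ (z - c))ᗮ.reflection : E →L[ℝ] E)).det| • f (inversion c R z) =
      kelvinTransform (2 * finrank ℝ E) c R f z := by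
  rw [abs_det_smul_reflection, abs_of_nonneg (by positivity), ← pow_mul, smul_eq_mul,
    kelvinTransform, ← Real.rpow_natCast]
  push_cast
  rfl

variable [MeasurableSpace E] [BorelSpace E] {μ : Measure E} [μ.IsAddHaarMeasure] [Nontrivial E]

lemma ball_sdiff_center_ae_eq_closedBall (μ : Measure E) [μ.IsAddHaarMeasure] (c : E)
    (R : ℝ) : (ball c R \ {c} : Set E) =ᵐ[μ] closedBall c R := by
  refine (sdiff_null_ae_eq_self (measure_singleton c)).trans ?_
  rw [← closedBall_sdiff_sphere]
  exact sdiff_null_ae_eq_self (Measure.addHaar_sphere μ c R)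

lemma integrableOn_compl_closedBall_kelvinTransform (hR : 0 < R)
    (hf : IntegrableOn f (closedBall c R) μ) :
    IntegrableOn (kelvinTransform (2 * finrank ℝ E) c R f) (closedBall c R)ᶜ μ := by
  rw [← integrableOn_congr_set_ae (ball_sdiff_center_ae_eq_closedBall μ c R),
    ← image_inversion_compl_closedBall c hR,
    integrableOn_image_iff_integrableOn_abs_det_fderiv_smul μ measurableSet_closedBall.compl
      (hasFDerivWithinAt_inversion_compl_closedBall hR.le)
      (inversion_injective c hR.ne').injOn f] at hf
  simpa only [abs_det_fderiv_inversion_smul] using hf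

lemma setIntegral_compl_closedBall_kelvinTransform (hR : 0 < R) (f : E → ℝ) :
    ∫ z in (closedBall c R)ᶜ, kelvinTransform (2 * finrank ℝ E) c R f z ∂μ =
      ∫ z in closedBall c R, f z ∂μ := by
  rw [← setIntegral_congr_set (ball_sdiff_center_ae_eq_closedBall μ c R),
    ← image_inversion_compl_closedBall c hR,
    integral_image_eq_integral_abs_det_fderiv_smul μ measurableSet_closedBall.compl
      (hasFDerivWithinAt_inversion_compl_closedBall hR.le)
      (inversion_injective c hR.ne').injOn f]
  simp only [abs_det_fderiv_inversion_smul]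

lemma integral_eq_setIntegral_add_kelvinTransform (hR : 0 < R) (hf : Integrable f μ) :
    ∫ z, f z ∂μ =
      ∫ z in (closedBall c R)ᶜ, (f z + kelvinTransform (2 * finrank ℝ E) c R f z) ∂μ := by
  rw [integral_add hf.integrableOn
      (integrableOn_compl_closedBall_kelvinTransform hR hf.integrableOn),
    setIntegral_compl_closedBall_kelvinTransform hR, add_comm,
    integral_add_compl₀ measurableSet_closedBall.nullMeasurableSet hf]

lemma integrableOn_kelvinKernel_mul_sub (hR : 0 < R) (hy : y ≠ c)
    (hfy : Integrable (fun z => dist y z ^ (-s) * f z) μ)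
    (hfi : Integrable (fun z => dist (inversion c R y) z ^ (-s) * f z) μ) :
    IntegrableOn (fun z => kelvinKernel s c R y z *
      (f z - kelvinTransform (2 * finrank ℝ E - s) c R f z)) (closedBall c R)ᶜ μ := by
  have hK := integrable_kelvinKernel_mul hfy hfi
  exact (hK.integrableOn.add (integrableOn_compl_closedBall_kelvinTransform hR
    hK.integrableOn)).congr_fun (kelvinKernel_mul_add_kelvinTransform hR hy f)
    measurableSet_closedBall.compl

lemma rieszPotential_sub_kelvinTransform (hR : 0 < R) (hy : y ≠ c)
    (hfy : Integrable (fun z => dist y z ^ (-s) * f z) μ)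
    (hfi : Integrable (fun z => dist (inversion c R y) z ^ (-s) * f z) μ) :
    rieszPotential μ s f y - kelvinTransform s c R (rieszPotential μ s f) y =
      ∫ z in (closedBall c R)ᶜ, kelvinKernel s c R y z *
        (f z - kelvinTransform (2 * finrank ℝ E - s) c R f z) ∂μ := by
  calc rieszPotential μ s f y - kelvinTransform s c R (rieszPotential μ s f) y
      = ∫ z, kelvinKernel s c R y z * f z ∂μ := by
        simp only [kelvinKernel, kelvinTransform, rieszPotential, sub_mul, mul_assoc]
        rw [integral_sub hfy (hfi.const_mul _), integral_const_mul]
    _ = ∫ z in (closedBall c R)ᶜ, (kelvinKernel s c R y z * f z +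
          kelvinTransform (2 * finrank ℝ E) c R (fun z => kelvinKernel s c R y z * f z) z) ∂μ :=
        integral_eq_setIntegral_add_kelvinTransform hR (integrable_kelvinKernel_mul hfy hfi)
    _ = _ := setIntegral_congr_fun measurableSet_closedBall.compl
        (kelvinKernel_mul_add_kelvinTransform hR hy f)

end Folding

section RieszKernel

variable {E : Type*} [NormedAddCommGroup E] [MeasurableSpace E] [BorelSpace E] {μ : Measure E}

lemma setIntegral_rpow_dist [μ.IsAddRightInvariant] (s : ℝ) (y : E) (A : Set E) :
    ∫ z in A, dist y z ^ s ∂μ = ∫ z in (· + y) ⁻¹' A, ‖z‖ ^ s ∂μ := by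
  have := (measurePreserving_add_right μ y).setIntegral_preimage_emb
    (MeasurableEquiv.addRight y).measurableEmbedding (fun z => dist y z ^ s) A
  simpa [dist_eq_norm, sub_add_cancel_right] using this.symm

variable [NormedSpace ℝ E] [FiniteDimensional ℝ E] [Nontrivial E] [μ.IsAddHaarMeasure] {s : ℝ}

lemma integrableOn_ball_rpow_norm (μ : Measure E) [μ.IsAddHaarMeasure] (hs : s < finrank ℝ E)
    (r : ℝ) : IntegrableOn (fun z => ‖z‖ ^ (-s)) (ball (0 : E) r) μ :=
  integrableOn_ball_of_norm_le_rpow (C := 1) Module.finrank_pos hs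
    (.of_forall fun z => by rw [one_mul, Real.norm_of_nonneg (by positivity)])
    (measurable_norm.pow_const (-s)).aestronglyMeasurable

lemma integrableOn_ball_rpow_dist (μ : Measure E) [μ.IsAddHaarMeasure] (hs : s < finrank ℝ E)
    (y : E) (r : ℝ) : IntegrableOn (fun z => dist y z ^ (-s)) (ball y r) μ := by
  have := (measurePreserving_sub_right μ y).integrableOn_comp_preimage
    (MeasurableEquiv.subRight y).measurableEmbedding
    |>.2 (integrableOn_ball_rpow_norm μ hs r)
  convert this using 1
  · ext z; simp [dist_eq_norm, norm_sub_rev y z]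
  · ext z; simp [dist_eq_norm]

/-- Uniformity in the pole `y` comes from the translation invariance of `μ`. -/
lemma exists_setIntegral_rpow_dist_le (μ : Measure E) [μ.IsAddHaarMeasure]
    (hs : s < finrank ℝ E) (r : ℝ) {κ : ℝ} (hκ : 0 < κ) :
    ∃ δ > 0, ∀ (y : E) (A : Set E), MeasurableSet A → A ⊆ ball y r → μ A < δ →
      ∫ z in A, dist y z ^ (-s) ∂μ ≤ κ := by
  have hint := integrableOn_ball_rpow_norm μ hs r
  obtain ⟨δ, hδ₀, hδ⟩ := exists_pos_setLIntegral_lt_of_measure_lt hint.lintegral_lt_top.ne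
    (ε := ENNReal.ofReal κ) (by simpa using hκ)
  refine ⟨δ, hδ₀, fun y A hA hAr hAδ => ?_⟩
  have hB : MeasurableSet ((· + y) ⁻¹' A) := measurable_add_const y hA
  have hBr : (· + y) ⁻¹' A ⊆ ball 0 r := fun z hz => by simpa using hAr hz
  rw [setIntegral_rpow_dist, integral_eq_lintegral_of_nonneg_ae
    (.of_forall fun z => by positivity) (hint.mono_set hBr).aestronglyMeasurable]
  refine ENNReal.toReal_le_of_le_ofReal hκ.le ?_
  have := hδ ((· + y) ⁻¹' A) <| by
    rwa [Measure.restrict_apply hB, inter_eq_left.2 hBr, measure_preimage_add_right]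
  rw [Measure.restrict_restrict hB, inter_eq_left.2 hBr] at this
  exact this.le

lemma tendsto_addHaar_ball_sdiff_ball (μ : Measure E) [μ.IsAddHaarMeasure] (c : E) (l : ℝ) :
    Tendsto (fun r => μ (ball c r \ ball c l)) (𝓝[>] l) (𝓝 0) := by
  have hsphere : ⋂ r > l, ball c r \ ball c l = sphere c l := by
    ext z
    simp only [mem_iInter, Set.mem_sdiff, mem_ball, not_lt, Metric.mem_sphere]
    refine ⟨fun h => le_antisymm (le_of_forall_gt_imp_ge_of_dense fun r hr => (h r hr).1.le)
      (h (l + 1) (by simp)).2, fun h r hr => ⟨h ▸ hr, h.ge⟩⟩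
  have := tendsto_measure_biInter_gt (μ := μ) (s := fun r => ball c r \ ball c l) (a := l)
    (fun r _ => (measurableSet_ball.diff measurableSet_ball).nullMeasurableSet)
    (fun _ _ _ h => sdiff_subset_sdiff_left (ball_subset_ball h))
    ⟨l + 1, by simp, (measure_mono sdiff_subset).trans_lt measure_ball_lt_top |>.ne⟩
  rwa [hsphere, Measure.addHaar_sphere] at this

lemma le_rieszPotential_of_le_on_closedBall (hs : 0 ≤ s) {f : E → ℝ} {c x : E} {r m : ℝ}
    (hm : 0 ≤ m) (hf : ∀ᵐ z ∂μ, 0 ≤ f z) (hmf : ∀ z ∈ closedBall c r, m ≤ f z)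
    (hx : Integrable (fun z => dist x z ^ (-s) * f z) μ) :
    m * μ.real (closedBall c r) * (dist x c + r) ^ (-s) ≤ rieszPotential μ s f x :=
  calc m * μ.real (closedBall c r) * (dist x c + r) ^ (-s)
      = ∫ _ in closedBall c r, (dist x c + r) ^ (-s) * m ∂μ := by
        rw [setIntegral_const, smul_eq_mul]; ring
    _ ≤ ∫ z in closedBall c r, dist x z ^ (-s) * f z ∂μ := by
        refine setIntegral_mono_on_ae (integrableOn_const measure_closedBall_lt_top.ne)
          hx.integrableOn measurableSet_closedBall ?_
        filter_upwards [Measure.ae_ne μ x] with z hzx hz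
        refine mul_le_mul (Real.rpow_le_rpow_of_nonpos (dist_pos.2 hzx.symm) ?_ (neg_nonpos.2 hs))
          (hmf z hz) hm (by positivity)
        linarith [dist_triangle_right x z c, mem_closedBall.1 hz]
    _ ≤ rieszPotential μ s f x :=
        setIntegral_le_integral hx (hf.mono fun z hz => by positivity)

lemma setIntegral_ball_rpow_dist_mul_le (hs : s < finrank ℝ E) {f : E → ℝ} {x x₀ : E} {r M : ℝ}
    (hM : 0 ≤ M) (hfM : ∀ᵐ z ∂μ, z ∈ ball x₀ r → f z ≤ M) (hx : dist x x₀ ≤ r)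
    (hint : Integrable (fun z => dist x z ^ (-s) * f z) μ) :
    ∫ z in ball x₀ r, dist x z ^ (-s) * f z ∂μ ≤ (∫ z in ball 0 (2 * r), ‖z‖ ^ (-s) ∂μ) * M := by
  have hxr : ball x₀ r ⊆ ball x (2 * r) := ball_subset_ball' (by linarith [dist_comm x x₀])
  have hker := integrableOn_ball_rpow_dist μ hs x (2 * r)
  calc ∫ z in ball x₀ r, dist x z ^ (-s) * f z ∂μ
      ≤ ∫ z in ball x₀ r, dist x z ^ (-s) * M ∂μ := by
        refine setIntegral_mono_on_ae hint.integrableOn ((hker.mono_set hxr).mul_const M)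
          measurableSet_ball (hfM.mono fun z hz hzr => ?_)
        exact mul_le_mul_of_nonneg_left (hz hzr) (by positivity)
    _ = (∫ z in ball x₀ r, dist x z ^ (-s) ∂μ) * M := integral_mul_const _ _
    _ ≤ (∫ z in ball x (2 * r), dist x z ^ (-s) ∂μ) * M :=
        mul_le_mul_of_nonneg_right (setIntegral_mono_set hker
          (.of_forall fun z => by positivity) hxr.eventuallyLE) hM
    _ = (∫ z in ball 0 (2 * r), ‖z‖ ^ (-s) ∂μ) * M := by
        rw [setIntegral_rpow_dist]
        congr 4; ext z; simp

lemma setIntegral_compl_ball_rpow_dist_mul_le (hs : 0 ≤ s) {f : E → ℝ} {x x₀ z₀ : E} {r : ℝ}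
    (hf : ∀ᵐ z ∂μ, 0 ≤ f z) (hx : dist x x₀ ≤ r / 2) (hr : dist z₀ x₀ ≤ r)
    (hint : Integrable (fun z => dist x z ^ (-s) * f z) μ)
    (hz₀ : Integrable (fun z => dist z₀ z ^ (-s) * f z) μ) :
    ∫ z in (ball x₀ r)ᶜ, dist x z ^ (-s) * f z ∂μ ≤ 4 ^ s * rieszPotential μ s f z₀ := by
  calc ∫ z in (ball x₀ r)ᶜ, dist x z ^ (-s) * f z ∂μ
      ≤ ∫ z in (ball x₀ r)ᶜ, 4 ^ s * (dist z₀ z ^ (-s) * f z) ∂μ := by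
        refine setIntegral_mono_on_ae hint.integrableOn (hz₀.const_mul _).integrableOn
          measurableSet_ball.compl ?_
        filter_upwards [hf, Measure.ae_ne μ z₀] with z hfz hzz₀ hz
        have hpos : 0 < dist z₀ z := dist_pos.2 hzz₀.symm
        have hle : dist z₀ z / 4 ≤ dist x z := by
          rw [mem_compl_iff, mem_ball, not_lt] at hz
          linarith [dist_triangle_left z x₀ x, dist_triangle_right z₀ z x₀]
        have hkernel := Real.rpow_le_rpow_of_nonpos (by positivity) hle (neg_nonpos.2 hs)
        rw [Real.div_rpow hpos.le (by norm_num), Real.rpow_neg (x := 4) (by norm_num),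
          div_inv_eq_mul] at hkernel
        nlinarith
    _ = 4 ^ s * ∫ z in (ball x₀ r)ᶜ, dist z₀ z ^ (-s) * f z ∂μ := integral_const_mul _ _
    _ ≤ 4 ^ s * rieszPotential μ s f z₀ := by
        gcongr
        exact setIntegral_le_integral hz₀ (hf.mono fun z hz => by positivity)

lemma exists_forall_rieszPotential_le (hs₀ : 0 ≤ s) (hs : s < finrank ℝ E) {f : E → ℝ}
    {x₀ z₀ : E} {r M : ℝ} (hM : 0 ≤ M) (hf : ∀ᵐ z ∂μ, 0 ≤ f z)
    (hfM : ∀ᵐ z ∂μ, z ∈ ball x₀ r → f z ≤ M) (hr : dist z₀ x₀ ≤ r)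
    (hz₀ : Integrable (fun z => dist z₀ z ^ (-s) * f z) μ) :
    ∃ K, ∀ x ∈ ball x₀ (r / 2), Integrable (fun z => dist x z ^ (-s) * f z) μ →
      rieszPotential μ s f x ≤ K := by
  refine ⟨(∫ z in ball 0 (2 * r), ‖z‖ ^ (-s) ∂μ) * M + 4 ^ s * rieszPotential μ s f z₀,
    fun x hx hint => ?_⟩
  have hx : dist x x₀ ≤ r / 2 := (mem_ball.1 hx).le
  rw [rieszPotential, ← integral_add_compl measurableSet_ball hint]
  exact add_le_add
    (setIntegral_ball_rpow_dist_mul_le hs hM hfM (by linarith [dist_nonneg.trans hr]) hint)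
    (setIntegral_compl_ball_rpow_dist_mul_le hs₀ hf hx hr hint hz₀)

end RieszKernel

section SingularSolution

/-- Solutions of `u = ∫ |x - y|^(-s) u(y)^p dμ(y)` whose only singularity is at `x₀`, with `s`
standing for `n - α`. Nothing is asked of the value `u x₀`. -/
structure IsSingularSolution {X : Type*} [PseudoMetricSpace X] [MeasurableSpace X] (μ : Measure X)
    (s p : ℝ) (x₀ : X) (u : X → ℝ) : Prop where
  pos : ∀ x ≠ x₀, 0 < u x
  continuousOn : ContinuousOn u {x₀}ᶜ
  exists_lt : ∀ ε > (0 : ℝ), ∀ M : ℝ, ∃ x ∈ ball x₀ ε, M < u x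
  eq_rieszPotential : ∀ x ≠ x₀, u x = rieszPotential μ s (fun y => u y ^ p) x

namespace IsSingularSolution

section Metric

variable {X : Type*} [MetricSpace X] [MeasurableSpace X] {μ : Measure X} {s p : ℝ} {x₀ x c : X}
  {u : X → ℝ} (S : IsSingularSolution μ s p x₀ u)

include S

lemma continuousAt (hx : x ≠ x₀) : ContinuousAt u x :=
  S.continuousOn.continuousAt (isOpen_compl_singleton.mem_nhds hx)

lemma integrable (hx : x ≠ x₀) : Integrable (fun z => dist x z ^ (-s) * u z ^ p) μ := by
  by_contra h
  exact (S.pos x hx).ne' ((S.eq_rieszPotential x hx).trans (integral_undef h))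

lemma ae_rpow_pos [NullSingletonClass μ] : ∀ᵐ z ∂μ, 0 < u z ^ p :=
  (Measure.ae_ne μ x₀).mono fun z hz => Real.rpow_pos_of_pos (S.pos z hz) p

lemma exists_ne_mem_ball_lt {ε : ℝ} (hε : 0 < ε) (M : ℝ) :
    ∃ x ≠ x₀, x ∈ ball x₀ ε ∧ M < u x := by
  obtain ⟨x, hx, hM⟩ := S.exists_lt ε hε (max M (u x₀))
  exact ⟨x, by rintro rfl; exact (le_max_right _ _).not_gt hM, hx, (le_max_left _ _).trans_lt hM⟩

lemma exists_ball_subset_forall_lt {ε : ℝ} (hε : 0 < ε) (M : ℝ) :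
    ∃ z₀, ∃ ρ > 0, ball z₀ ρ ⊆ ball x₀ ε ∧ ∀ z ∈ ball z₀ ρ, M < u z := by
  obtain ⟨z₀, hz₀, hmem, hM⟩ := S.exists_ne_mem_ball_lt hε M
  obtain ⟨ρ, hρ, h⟩ := Metric.eventually_nhds_iff_ball.1 <|
    (isOpen_ball.eventually_mem hmem).and ((S.continuousAt hz₀).eventually_const_lt hM)
  exact ⟨z₀, ρ, hρ, fun z hz => (h z hz).1, fun z hz => (h z hz).2⟩

lemma continuousOn_closedBall {r : ℝ} (hr : r < dist x₀ c) : ContinuousOn u (closedBall c r) :=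
  S.continuousOn.mono fun _ hz hzx => hr.not_ge (hzx ▸ mem_closedBall.1 hz)

lemma exists_forall_le_on_closedBall [ProperSpace X] {r : ℝ} (hr : r < dist x₀ c) :
    ∃ M > 0, ∀ z ∈ closedBall c r, u z ≤ M := by
  obtain ⟨M, hM⟩ := (isCompact_closedBall c r).bddAbove_image (S.continuousOn_closedBall hr)
  exact ⟨max M 1, by positivity, fun z hz => le_max_of_le_left (hM ⟨z, hz, rfl⟩)⟩

end Metric

section Euclidean

variable {E : Type*} [NormedAddCommGroup E] [NormedSpace ℝ E] [FiniteDimensional ℝ E]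
  [Nontrivial E] [MeasurableSpace E] [BorelSpace E] {μ : Measure E} [μ.IsAddHaarMeasure]
  {s p : ℝ} {x₀ c : E} {u : E → ℝ} (S : IsSingularSolution μ s p x₀ u)

include S

lemma exists_mul_rpow_le (hs : 0 ≤ s) (hc : c ≠ x₀) :
    ∃ A > 0, ∃ r > 0, ∀ x ≠ x₀, A * (dist x c + r) ^ (-s) ≤ u x := by
  have hd : 0 < dist x₀ c := dist_pos.2 hc.symm
  set r := dist x₀ c / 2
  have hr : 0 < r := half_pos hd
  have hne : ∀ z ∈ closedBall c r, z ≠ x₀ := by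
    rintro z hz rfl
    exact (half_lt_self hd).not_ge (mem_closedBall.1 hz)
  have hcont : ContinuousOn (fun z => u z ^ p) (closedBall c r) :=
    (S.continuousOn_closedBall (half_lt_self hd)).rpow_const fun z hz =>
      Or.inl (S.pos z (hne z hz)).ne'
  obtain ⟨z₀, hz₀, hmin⟩ := (isCompact_closedBall c r).exists_isMinOn
    (nonempty_closedBall.2 hr.le) hcont
  have hm : 0 < u z₀ ^ p := Real.rpow_pos_of_pos (S.pos z₀ (hne z₀ hz₀)) p
  have hv : 0 < μ.real (closedBall c r) :=
    ENNReal.toReal_pos (measure_closedBall_pos μ c hr).ne' measure_closedBall_lt_top.ne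
  refine ⟨u z₀ ^ p * μ.real (closedBall c r), by positivity, r, hr, fun x hx => ?_⟩
  rw [S.eq_rieszPotential x hx]
  exact le_rieszPotential_of_le_on_closedBall hs hm.le (S.ae_rpow_pos.mono fun z hz => hz.le)
    hmin (S.integrable hx)

lemma exists_pos_forall_le (hs : 0 ≤ s) (hc : c ≠ x₀) (R : ℝ) :
    ∃ m > 0, ∀ x ≠ x₀, dist x c ≤ R → m ≤ u x := by
  obtain ⟨A, hA, r, hr, hle⟩ := S.exists_mul_rpow_le hs hc
  refine ⟨A * (|R| + r) ^ (-s), by positivity, fun x hx hxR => le_trans ?_ (hle x hx)⟩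
  refine mul_le_mul_of_nonneg_left ?_ hA.le
  exact Real.rpow_le_rpow_of_nonpos (by positivity) (by linarith [le_abs_self R]) (by linarith)

/-- For `p ≤ 0` the lower bound on `u` would bound `u ^ p` near `x₀`, and with it the potential. -/
lemma exponent_pos (hs₀ : 0 ≤ s) (hs : s < finrank ℝ E) : 0 < p := by
  by_contra! hp
  obtain ⟨z₀, hz₀⟩ := NormedSpace.sphere_nonempty (x := x₀).2 zero_le_one
  rw [Metric.mem_sphere] at hz₀
  have hne : z₀ ≠ x₀ := by rintro rfl; simp at hz₀
  obtain ⟨m, hm, hle⟩ := S.exists_pos_forall_le hs₀ hne 2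
  have hbound : ∀ᵐ z ∂μ, z ∈ ball x₀ 1 → u z ^ p ≤ m ^ p := by
    filter_upwards [Measure.ae_ne μ x₀] with z hz hz₁
    refine Real.rpow_le_rpow_of_nonpos hm (hle z hz ?_) hp
    linarith [dist_triangle_right z z₀ x₀, mem_ball.1 hz₁]
  obtain ⟨K, hK⟩ := exists_forall_rieszPotential_le hs₀ hs (by positivity)
    (S.ae_rpow_pos.mono fun z hz => hz.le) hbound hz₀.le (S.integrable hne)
  obtain ⟨x, hx, hxball, hKx⟩ := S.exists_ne_mem_ball_lt (half_pos one_pos) K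
  have := hK x hxball (S.integrable hx)
  rw [← S.eq_rieszPotential x hx] at this
  exact this.not_gt hKx

end Euclidean

end IsSingularSolution

end SingularSolution

section MovingSpheres

variable {E : Type*} [NormedAddCommGroup E] [InnerProductSpace ℝ E] {s p R : ℝ} {x₀ c : E}
  {u : E → ℝ}

/-- The points at which `u` fails to dominate its Kelvin transform in the sphere of centre `c` and
radius `R`, among those outside that sphere and distinct from the singularity. -/
def violationSet (s : ℝ) (x₀ : E) (u : E → ℝ) (c : E) (R : ℝ) : Set E :=
  {y | y ≠ x₀ ∧ R ≤ dist y c ∧ u y < kelvinTransform s c R u y}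

lemma violationSet_eq_empty_iff :
    violationSet s x₀ u c R = ∅ ↔
      ∀ y ≠ x₀, R ≤ dist y c → kelvinTransform s c R u y ≤ u y := by
  simp [violationSet, eq_empty_iff_forall_notMem]

namespace IsSingularSolution

variable [MeasurableSpace E] {μ : Measure E} (S : IsSingularSolution μ s p x₀ u)

include S

lemma kelvinTransform_pos (hR : 0 < R) (hR₀ : R < dist x₀ c) {y : E} (hy : R ≤ dist y c) :
    0 < kelvinTransform s c R u y :=
  MovingSpheres.kelvinTransform_pos hR hy (S.pos _ (inversion_ne_of_lt_dist hR hR₀ hy))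

lemma kelvinTransform_rpow_le {t : ℝ} (hpt : p * s ≤ t) (hR : 0 < R) (hR₀ : R < dist x₀ c) {y : E}
    (hy : R ≤ dist y c) :
    kelvinTransform t c R (fun x => u x ^ p) y ≤ kelvinTransform s c R u y ^ p :=
  MovingSpheres.kelvinTransform_rpow_le hpt hR hy (S.pos _ (inversion_ne_of_lt_dist hR hR₀ hy))

lemma kelvinTransform_rpow_le_rpow {t : ℝ} (hp : 0 ≤ p) (hpt : p * s ≤ t) (hR : 0 < R)
    (hR₀ : R < dist x₀ c) {y : E} (hy : R ≤ dist y c) (hyu : kelvinTransform s c R u y ≤ u y) :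
    kelvinTransform t c R (fun x => u x ^ p) y ≤ u y ^ p :=
  (S.kelvinTransform_rpow_le hpt hR hR₀ hy).trans <|
    Real.rpow_le_rpow (S.kelvinTransform_pos hR hR₀ hy).le hyu hp

lemma isClosed_setOf_violationSet_eq_empty {R₀ R₁ : ℝ} (hR₀ : 0 < R₀) (hR₁ : R₁ < dist x₀ c) :
    IsClosed ({R | violationSet s x₀ u c R = ∅} ∩ Icc R₀ R₁) := by
  refine IsSeqClosed.isClosed fun R r hR hRr => ?_
  have hr : r ∈ Icc R₀ R₁ := isClosed_Icc.mem_of_tendsto hRr (.of_forall fun k => (hR k).2)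
  have hr₀ : 0 < r := hR₀.trans_le hr.1
  refine ⟨violationSet_eq_empty_iff.2 fun y hyx hy => ?_, hr⟩
  obtain hy | hy := hy.eq_or_lt
  · exact (kelvinTransform_of_dist_eq hr₀ hy.symm).le
  · have hcont := continuousAt_kelvinTransform_radius (s := s) hr₀.ne' (dist_pos.1 (hr₀.trans hy))
      (S.continuousAt (inversion_ne_of_lt_dist hr₀ (hr.2.trans_lt hR₁) hy.le))
    refine le_of_tendsto (hcont.tendsto.comp hRr) ?_
    filter_upwards [hRr.eventually_lt_const hy] with k hk
    exact violationSet_eq_empty_iff.1 (hR k).1 y hyx hk.le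

variable [FiniteDimensional ℝ E] [Nontrivial E] [BorelSpace E] [μ.IsAddHaarMeasure]

lemma integrableOn_kelvinKernel_mul_sub (hR : 0 < R) (hR₀ : R < dist x₀ c) {y : E} (hyx : y ≠ x₀)
    (hy : R ≤ dist y c) :
    IntegrableOn (fun z => kelvinKernel s c R y z *
      (u z ^ p - kelvinTransform (2 * finrank ℝ E - s) c R (fun x => u x ^ p) z))
      (closedBall c R)ᶜ μ :=
  MovingSpheres.integrableOn_kelvinKernel_mul_sub hR (dist_pos.1 (hR.trans_le hy))
    (S.integrable hyx) (S.integrable (inversion_ne_of_lt_dist hR hR₀ hy))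

lemma sub_kelvinTransform (hR : 0 < R) (hR₀ : R < dist x₀ c) {y : E} (hyx : y ≠ x₀)
    (hy : R ≤ dist y c) :
    u y - kelvinTransform s c R u y = ∫ z in (closedBall c R)ᶜ, kelvinKernel s c R y z *
      (u z ^ p - kelvinTransform (2 * finrank ℝ E - s) c R (fun x => u x ^ p) z) ∂μ := by
  have hne := inversion_ne_of_lt_dist hR hR₀ hy
  rw [← rieszPotential_sub_kelvinTransform hR (dist_pos.1 (hR.trans_le hy)) (S.integrable hyx)
    (S.integrable hne), kelvinTransform, kelvinTransform, S.eq_rieszPotential y hyx,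
    S.eq_rieszPotential _ hne]

/-- Only violations make the integrand negative, and `kelvinKernel ≤ dist y z ^ (-s)`. -/
lemma kelvinTransform_sub_le_mul_setIntegral (hs : 0 ≤ s) (hp : 0 ≤ p)
    (hps : p * s ≤ 2 * finrank ℝ E - s) (hR : 0 < R) (hR₀ : R < dist x₀ c) {A : Set E}
    (hA : MeasurableSet A) (hVA : violationSet s x₀ u c R ⊆ A) {K : ℝ} (hK : 0 ≤ K)
    (hVK : ∀ z ∈ violationSet s x₀ u c R, kelvinTransform s c R u z ^ p - u z ^ p ≤ K)
    {y : E} (hyx : y ≠ x₀) (hy : R ≤ dist y c)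
    (hint : IntegrableOn (fun z => dist y z ^ (-s)) A μ) :
    kelvinTransform s c R u y - u y ≤ (∫ z in A, dist y z ^ (-s) ∂μ) * K := by
  set bound := A.indicator fun z => dist y z ^ (-s) * K
  have hbound : ∀ z, 0 ≤ bound z := indicator_nonneg fun z _ => by positivity
  have hbound_int : Integrable bound μ := IntegrableOn.integrable_indicator (hint.mul_const K) hA
  calc kelvinTransform s c R u y - u y
      = ∫ z in (closedBall c R)ᶜ, -(kelvinKernel s c R y z *
          (u z ^ p - kelvinTransform (2 * finrank ℝ E - s) c R (fun x => u x ^ p) z)) ∂μ := by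
        rw [integral_neg, ← S.sub_kelvinTransform hR hR₀ hyx hy, neg_sub]
    _ ≤ ∫ z in (closedBall c R)ᶜ, bound z ∂μ := by
        refine setIntegral_mono_on_ae (S.integrableOn_kelvinKernel_mul_sub hR hR₀ hyx hy).neg
          hbound_int.integrableOn measurableSet_closedBall.compl ?_
        filter_upwards [Measure.ae_ne μ x₀, Measure.ae_ne μ y] with z hzx hzy hz
        rw [mem_compl_iff, mem_closedBall, not_le] at hz
        have hker := kelvinKernel_nonneg hs hR hy hz.le hzy.symm
        rw [← mul_neg, neg_sub]
        by_cases hzV : z ∈ violationSet s x₀ u c R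
        · rw [show bound z = dist y z ^ (-s) * K from indicator_of_mem (hVA hzV) _]
          have := S.kelvinTransform_rpow_le hps hR hR₀ hz.le
          exact mul_le_mul_of_nonneg (kelvinKernel_le s hR.le c y z) (by linarith [hVK z hzV])
            hker hK
        · have := S.kelvinTransform_rpow_le_rpow hp hps hR hR₀ hz.le
            (not_lt.1 fun h => hzV ⟨hzx, hz.le, h⟩)
          exact (mul_nonpos_of_nonneg_of_nonpos hker (by linarith)).trans (hbound z)
    _ ≤ ∫ z, bound z ∂μ := setIntegral_le_integral hbound_int (.of_forall hbound)
    _ = (∫ z in A, dist y z ^ (-s) ∂μ) * K := by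
        rw [integral_indicator hA, integral_mul_const]

lemma exists_violationSet_eq_empty_of_measure_lt (hs₀ : 0 ≤ s) (hs : s < finrank ℝ E)
    (hps : p * s ≤ 2 * finrank ℝ E - s) {R₁ : ℝ} (hR₁₀ : 0 < R₁) (hR₁ : R₁ < dist x₀ c) (r : ℝ) :
    ∃ δ > 0, ∀ R, 0 < R → R ≤ R₁ → ∀ A, MeasurableSet A → A ⊆ ball c r → μ A < δ →
      violationSet s x₀ u c R ⊆ A → violationSet s x₀ u c R = ∅ := by
  have hp := S.exponent_pos hs₀ hs
  have hc : c ≠ x₀ := (dist_pos.1 (hR₁₀.trans hR₁)).symm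
  obtain ⟨M, hM₀, hM⟩ := S.exists_forall_le_on_closedBall hR₁
  obtain ⟨m, hm₀, hm⟩ := S.exists_pos_forall_le hs₀ hc r
  obtain ⟨L, hL₀, hL⟩ := exists_rpow_sub_rpow_le hm₀ M p
  obtain ⟨δ, hδ₀, hδ⟩ := exists_setIntegral_rpow_dist_le μ hs (2 * r) (κ := 1 / (2 * L))
    (by positivity)
  refine ⟨δ, hδ₀, fun R hR hRR₁ A hA hAr hAδ hVA => ?_⟩
  have hkM : ∀ y ∈ violationSet s x₀ u c R, kelvinTransform s c R u y ≤ M := fun y hy =>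
    kelvinTransform_le hs₀ hM₀.le hR hRR₁ hM hy.2.1
  refine eq_empty_of_forall_le_half (g := fun y => kelvinTransform s c R u y - u y)
    (fun y hy => sub_pos.2 hy.2.2)
    ⟨M, forall_mem_image.2 fun y hy => by linarith [hkM y hy, S.pos y hy.1]⟩
    fun K hK y hy => ?_
  have hK₀ : 0 ≤ K := (sub_pos.2 hy.2.2).le.trans (hK y hy)
  have hAy : A ⊆ ball y (2 * r) := fun z hz => by
    have hzr := mem_ball.1 (hAr hz)
    have hyr := mem_ball.1 (hAr (hVA hy))
    rw [mem_ball]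
    linarith [dist_triangle_right z y c]
  have hLip : ∀ z ∈ violationSet s x₀ u c R,
      kelvinTransform s c R u z ^ p - u z ^ p ≤ L * K := fun z hz =>
    (hL _ _ (hm z hz.1 (mem_ball.1 (hAr (hVA hz))).le) hz.2.2.le (hkM z hz)).trans
      (mul_le_mul_of_nonneg_left (hK z hz) hL₀.le)
  calc kelvinTransform s c R u y - u y
      ≤ (∫ z in A, dist y z ^ (-s) ∂μ) * (L * K) :=
        S.kelvinTransform_sub_le_mul_setIntegral hs₀ hp.le hps hR (hRR₁.trans_lt hR₁) hA hVA
          (by positivity) hLip hy.1 hy.2.1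
          ((integrableOn_ball_rpow_dist μ hs y (2 * r)).mono_set hAy)
    _ ≤ 1 / (2 * L) * (L * K) := by gcongr; exact hδ y A hA hAy hAδ
    _ = K / 2 := by field_simp

lemma eventually_violationSet_eq_empty_nhdsGT_zero (hs₀ : 0 < s) (hs : s < finrank ℝ E)
    (hps : p * s ≤ 2 * finrank ℝ E - s) (hc : c ≠ x₀) :
    ∀ᶠ R in 𝓝[>] 0, violationSet s x₀ u c R = ∅ := by
  have hd : 0 < dist x₀ c := dist_pos.2 hc.symm
  obtain ⟨M, hM₀, hM⟩ := S.exists_forall_le_on_closedBall (half_lt_self hd)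
  obtain ⟨A, hA, r, hr, hlow⟩ := S.exists_mul_rpow_le hs₀.le hc
  obtain ⟨δ, hδ, hnarrow⟩ := S.exists_violationSet_eq_empty_of_measure_lt hs₀.le hs hps
    (half_pos hd) (half_lt_self hd) 1
  obtain ⟨t, ht, ht₀, ht₁⟩ : ∃ t, μ (ball c t) < δ ∧ 0 < t ∧ t ≤ 1 := by
    have hlim := (tendsto_addHaar_ball_sdiff_ball μ c 0).eventually_lt_const hδ
    simp only [ball_zero, sdiff_empty] at hlim
    exact (hlim.and (Ioc_mem_nhdsGT one_pos)).exists
  filter_upwards [eventually_forall_div_rpow_mul_le hs₀ hA hr.le hM₀.le ht₀,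
    Ioc_mem_nhdsGT (half_pos hd)] with R hfar hR
  refine hnarrow R hR.1 hR.2 _ measurableSet_ball (ball_subset_ball ht₁) ht fun y hy => ?_
  by_contra hyt
  rw [mem_ball, not_lt] at hyt
  have hupper := kelvinTransform_le_mul (s := s) hR.1 hR.2 hM hy.2.1
  exact hy.2.2.not_ge ((hupper.trans (hfar _ hyt)).trans (hlow y hy.1))

lemma mul_measureReal_le_mul_sub_kelvinTransform (hs : 0 ≤ s) (hp : 0 ≤ p)
    (hps : p * s ≤ 2 * finrank ℝ E - s) (hR : 0 < R) (hR₀ : R < dist x₀ c)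
    (hV : violationSet s x₀ u c R = ∅) {B : Set E} (hB : MeasurableSet B) (hBμ : μ B ≠ ⊤)
    (hBR : B ⊆ (closedBall c R)ᶜ) {y : E} (hyx : y ≠ x₀) (hy : R ≤ dist y c) {k h : ℝ}
    (hk₀ : 0 ≤ k) (hh₀ : 0 ≤ h)
    (hk : ∀ z ∈ B, y ≠ z → k ≤ dist y c ^ s * kelvinKernel s c R y z)
    (hh : ∀ z ∈ B, h ≤ u z ^ p -
      kelvinTransform (2 * finrank ℝ E - s) c R (fun x => u x ^ p) z) :
    k * h * μ.real B ≤ dist y c ^ s * (u y - kelvinTransform s c R u y) := by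
  have hint := (S.integrableOn_kelvinKernel_mul_sub hR hR₀ hyx hy).const_mul (dist y c ^ s)
  rw [S.sub_kelvinTransform hR hR₀ hyx hy, ← integral_const_mul]
  calc k * h * μ.real B = ∫ _ in B, k * h ∂μ := by rw [setIntegral_const, smul_eq_mul, mul_comm]
    _ ≤ ∫ z in B, dist y c ^ s * (kelvinKernel s c R y z * (u z ^ p -
          kelvinTransform (2 * finrank ℝ E - s) c R (fun x => u x ^ p) z)) ∂μ := by
        refine setIntegral_mono_on_ae (integrableOn_const hBμ)
          (IntegrableOn.mono_set hint hBR) hB ?_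
        filter_upwards [Measure.ae_ne μ y] with z hzy hz
        rw [← mul_assoc]
        exact mul_le_mul_of_nonneg (hk z hz hzy.symm) (hh z hz) hk₀ (hh₀.trans (hh z hz))
    _ ≤ _ := by
        refine setIntegral_mono_set hint ?_ hBR.eventuallyLE
        refine (ae_restrict_iff' measurableSet_closedBall.compl).2 ?_
        filter_upwards [Measure.ae_ne μ x₀, Measure.ae_ne μ y] with z hzx hzy hz
        rw [mem_compl_iff, mem_closedBall, not_le] at hz
        have hker := kelvinKernel_nonneg hs hR hy hz.le hzy.symm
        have hdiff := sub_nonneg.2 <| S.kelvinTransform_rpow_le_rpow hp hps hR hR₀ hz.le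
          (violationSet_eq_empty_iff.1 hV z hzx hz.le)
        exact mul_nonneg (by positivity) (mul_nonneg hker hdiff)

/-- Near its singularity `u` exceeds its Kelvin transform substantially, and the kernel spreads
this excess to every point away from the sphere, with the decay `dist y c ^ (-s)`. -/
lemma exists_pos_forall_le_mul_sub_kelvinTransform (hs₀ : 0 < s) (hs : s < finrank ℝ E)
    (hps : p * s ≤ 2 * finrank ℝ E - s) (hR : 0 < R) (hR₀ : R < dist x₀ c)
    (hV : violationSet s x₀ u c R = ∅) {r : ℝ} (hr : R < r) :
    ∃ e > 0, ∀ y ≠ x₀, r ≤ dist y c → e ≤ dist y c ^ s * (u y - kelvinTransform s c R u y) := by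
  have hp := S.exponent_pos hs₀.le hs
  obtain ⟨M, hM₀, hM⟩ := S.exists_forall_le_on_closedBall hR₀
  set ε := (dist x₀ c - R) / 2 with hε
  have hε₀ : 0 < ε := half_pos (sub_pos.2 hR₀)
  obtain ⟨z₀, ρ, hρ, hsub, hu⟩ := S.exists_ball_subset_forall_lt hε₀ (2 * M)
  have hnear : ∀ z ∈ ball z₀ ρ, R + ε ≤ dist z c := fun z hz => by
    linarith [dist_triangle_left x₀ c z, mem_ball.1 (hsub hz)]
  have hfar : ∀ z ∈ ball z₀ ρ, dist z c ≤ dist x₀ c + ε := fun z hz => by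
    linarith [dist_triangle z x₀ c, mem_ball.1 (hsub hz)]
  have hRz : ∀ z ∈ ball z₀ ρ, R < dist z c := fun z hz => by linarith [hnear z hz]
  obtain ⟨k, hk₀, hk⟩ := exists_le_rpow_dist_mul_kelvinKernel c hs₀ hR hr
    (r₂ := R + ε) (r₃ := dist x₀ c + ε) (by linarith) (by linarith)
  have hgap : 0 < (2 * M) ^ p - M ^ p :=
    sub_pos.2 (Real.rpow_lt_rpow hM₀.le (by linarith) hp)
  have hexcess : ∀ z ∈ ball z₀ ρ, (2 * M) ^ p - M ^ p ≤ u z ^ p -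
      kelvinTransform (2 * finrank ℝ E - s) c R (fun x => u x ^ p) z := fun z hz => by
    have hup : (2 * M) ^ p ≤ u z ^ p := Real.rpow_le_rpow (by positivity) (hu z hz).le hp.le
    have hkelvin : kelvinTransform s c R u z ^ p ≤ M ^ p :=
      Real.rpow_le_rpow (S.kelvinTransform_pos hR hR₀ (hRz z hz).le).le
        (kelvinTransform_le hs₀.le hM₀.le hR le_rfl hM (hRz z hz).le) hp.le
    linarith [S.kelvinTransform_rpow_le hps hR hR₀ (hRz z hz).le]
  have hv : 0 < μ.real (ball z₀ ρ) :=
    ENNReal.toReal_pos (measure_ball_pos μ z₀ hρ).ne' measure_ball_lt_top.ne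
  exact ⟨k * ((2 * M) ^ p - M ^ p) * μ.real (ball z₀ ρ), by positivity, fun y hyx hy =>
    S.mul_measureReal_le_mul_sub_kelvinTransform hs₀.le hp.le hps hR hR₀ hV measurableSet_ball
      measure_ball_lt_top.ne (fun z hz hzR => (hRz z hz).not_ge hzR) hyx (hr.le.trans hy) hk₀.le
      hgap.le (fun z hz => hk y z hy (hnear z hz) (hfar z hz)) hexcess⟩

lemma eventually_violationSet_subset_ball (hs₀ : 0 < s) (hs : s < finrank ℝ E)
    (hps : p * s ≤ 2 * finrank ℝ E - s) (hR : 0 < R) (hR₀ : R < dist x₀ c)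
    (hV : violationSet s x₀ u c R = ∅) {r : ℝ} (hr : R < r) :
    ∀ᶠ R' in 𝓝[>] R, violationSet s x₀ u c R' ⊆ ball c r := by
  obtain ⟨e, he₀, he⟩ := S.exists_pos_forall_le_mul_sub_kelvinTransform hs₀ hs hps hR hR₀ hV hr
  obtain ⟨R₁, hRR₁, hR₁⟩ := exists_between hR₀
  filter_upwards [eventually_forall_mul_kelvinTransform_lt_add s hR hRR₁
    (S.continuousOn_closedBall hR₁) he₀] with R' hclose y hy
  by_contra hyr
  rw [mem_ball, not_lt] at hyr
  have hpos : 0 < dist y c ^ s := Real.rpow_pos_of_pos (by linarith) s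
  have := mul_lt_mul_of_pos_left hy.2.2 hpos
  linarith [he y hy.1 hyr, hclose y hy.2.1]

lemma eventually_violationSet_eq_empty_nhdsGT (hs₀ : 0 < s) (hs : s < finrank ℝ E)
    (hps : p * s ≤ 2 * finrank ℝ E - s) (hR : 0 < R) (hR₀ : R < dist x₀ c)
    (hV : violationSet s x₀ u c R = ∅) : ∀ᶠ R' in 𝓝[>] R, violationSet s x₀ u c R' = ∅ := by
  obtain ⟨R₁, hRR₁, hR₁⟩ := exists_between hR₀
  obtain ⟨δ, hδ, hnarrow⟩ := S.exists_violationSet_eq_empty_of_measure_lt hs₀.le hs hps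
    (hR.trans hRR₁) hR₁ (R + 1)
  obtain ⟨r, hrδ, hRr, hr₁⟩ := (((tendsto_addHaar_ball_sdiff_ball μ c R).eventually_lt_const
    hδ).and (Ioc_mem_nhdsGT (lt_add_one R))).exists
  filter_upwards [S.eventually_violationSet_subset_ball hs₀ hs hps hR hR₀ hV hRr,
    Ioc_mem_nhdsGT hRR₁] with R' hsub hR'
  refine hnarrow R' (hR.trans hR'.1) hR'.2 _ (measurableSet_ball.diff measurableSet_ball)
    (sdiff_subset.trans (ball_subset_ball hr₁)) hrδ fun y hy => ⟨hsub hy, ?_⟩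
  exact fun hyR => (hR'.1.le.trans hy.2.1).not_gt (mem_ball.1 hyR)

theorem violationSet_eq_empty (hs₀ : 0 < s) (hs : s < finrank ℝ E)
    (hps : p * s ≤ 2 * finrank ℝ E - s) (hR : 0 < R) (hR₀ : R < dist x₀ c) :
    violationSet s x₀ u c R = ∅ := by
  have hc : c ≠ x₀ := (dist_pos.1 (hR.trans hR₀)).symm
  obtain ⟨r, hV, hr₀, hrR⟩ := ((S.eventually_violationSet_eq_empty_nhdsGT_zero hs₀ hs hps hc).and
    (Ioc_mem_nhdsGT hR)).exists
  refine (S.isClosed_setOf_violationSet_eq_empty hr₀ hR₀).Icc_subset_of_forall_mem_nhdsWithin hV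
    (fun t ht => ?_) ⟨hrR, le_rfl⟩
  exact S.eventually_violationSet_eq_empty_nhdsGT hs₀ hs hps (hr₀.trans_le ht.2.1)
    (ht.2.2.trans hR₀) ht.1

lemma le_of_dist_lt_dist (hs₀ : 0 < s) (hs : s < finrank ℝ E)
    (hps : p * s ≤ 2 * finrank ℝ E - s) {y z : E} (hy : y ≠ x₀) (hyz : dist y x₀ < dist z x₀) :
    u z ≤ u y := by
  have hmain : ∀ q ∈ Ioo (0 : ℝ) 1, q ^ s * u z ≤ u y := fun q ⟨hq₀, hq₁⟩ => by
    obtain ⟨c, hyc, hqc, hinv⟩ := exists_inversion_eq_of_dist_lt hq₀ hq₁ hyz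
    have hd : 0 < dist y c := dist_pos.2 hyc
    have hle := violationSet_eq_empty_iff.1
      (S.violationSet_eq_empty hs₀ hs hps (mul_pos hq₀ hd) hqc) y hy
      (mul_le_of_le_one_left hd.le hq₁.le)
    rwa [kelvinTransform, hinv, mul_div_cancel_right₀ _ hd.ne'] at hle
  have hlim : Tendsto (fun q : ℝ => q ^ s * u z) (𝓝[<] 1) (𝓝 (u z)) := by
    have : ContinuousAt (fun q : ℝ => q ^ s * u z) 1 :=
      (Real.continuousAt_rpow_const 1 s (.inl one_ne_zero)).mul_const _
    simpa using this.tendsto.mono_left nhdsWithin_le_nhds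
  exact le_of_tendsto hlim (mem_of_superset (Ioo_mem_nhdsLT one_pos) hmain)

theorem le_of_dist_le_dist (hs₀ : 0 < s) (hs : s < finrank ℝ E)
    (hps : p * s ≤ 2 * finrank ℝ E - s) {y z : E} (hy : y ≠ x₀) (hyz : dist y x₀ ≤ dist z x₀) :
    u z ≤ u y := by
  have hz : 0 < dist z x₀ := (dist_pos.2 hy).trans_le hyz
  have hlim : Tendsto (AffineMap.lineMap (k := ℝ) x₀ z) (𝓝[>] 1) (𝓝 z) := by
    have : Continuous (AffineMap.lineMap (k := ℝ) x₀ z) := AffineMap.lineMap_continuous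
    simpa using (this.tendsto 1).mono_left nhdsWithin_le_nhds
  refine le_of_tendsto ((S.continuousAt (dist_pos.1 hz)).tendsto.comp hlim) ?_
  filter_upwards [self_mem_nhdsWithin] with t ht
  rw [mem_Ioi] at ht
  refine S.le_of_dist_lt_dist hs₀ hs hps hy (hyz.trans_lt ?_)
  rw [dist_lineMap_left, Real.norm_of_nonneg (by linarith), dist_comm x₀]
  exact lt_mul_of_one_lt_left hz ht

end IsSingularSolution

end MovingSpheres

end MovingSpheres

theorem radial_symmetry_and_monotonicity_of_singular_solution_general {E : Type*}
    [NormedAddCommGroup E] [InnerProductSpace ℝ E] [FiniteDimensional ℝ E] [MeasurableSpace E]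
    [BorelSpace E] (μ : Measure E) [μ.IsAddHaarMeasure] {α p : ℝ} {x₀ : E} {u : E → ℝ}
    (hα₀ : 0 < α) (hα : α < Module.finrank ℝ E)
    (hp : p ≤ (Module.finrank ℝ E + α) / (Module.finrank ℝ E - α))
    (S : MovingSpheres.IsSingularSolution μ (Module.finrank ℝ E - α) p x₀ u) :
    (∀ x₁ x₂, dist x₁ x₀ = dist x₂ x₀ → u x₁ = u x₂) ∧
    (∀ x₁ x₂, 0 < dist x₁ x₀ → dist x₁ x₀ ≤ dist x₂ x₀ → u x₂ ≤ u x₁) := by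
  have hs : 0 < Module.finrank ℝ E - α := sub_pos.2 hα
  have hps : p * (Module.finrank ℝ E - α) ≤
      2 * Module.finrank ℝ E - (Module.finrank ℝ E - α) := by
    linarith [(le_div_iff₀ hs).1 hp]
  have : Nontrivial E := Module.finrank_pos_iff.1 (by exact_mod_cast hα₀.trans hα)
  have anti : ∀ x₁ x₂, 0 < dist x₁ x₀ → dist x₁ x₀ ≤ dist x₂ x₀ → u x₂ ≤ u x₁ :=
    fun x₁ x₂ h₁ h => S.le_of_dist_le_dist hs (by linarith) hps (dist_pos.1 h₁) h
  refine ⟨fun x₁ x₂ h => ?_, anti⟩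
  obtain h₀ | h₁ := (dist_nonneg (x := x₁) (y := x₀)).eq_or_lt
  · rw [dist_eq_zero.1 h₀.symm, dist_eq_zero.1 (h₀.trans h).symm]
  · exact (anti x₂ x₁ (h ▸ h₁) h.ge).antisymm (anti x₁ x₂ h₁ h.le)

/-- For `p ≤ (n+α)/(n-α)`, a solution of the integral equation with a single
singularity at `x⁰` is radially symmetric about `x⁰` and monotone decreasing
in `|x - x⁰|`. -/
theorem radial_symmetry_and_monotonicity_of_singular_solution
    (n : ℕ) (hn : 0 < n) (α p : ℝ) (hα0 : 0 < α) (hαn : α < n)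
    (hp : p ≤ (n + α) / (n - α))
    (x0 : EuclideanSpace ℝ (Fin n)) (u : EuclideanSpace ℝ (Fin n) → ℝ)
    (hpos : ∀ x, 0 < u x)
    (hcont : ContinuousOn u {x0}ᶜ)
    (hsing : ∀ ε > (0 : ℝ), ∀ M : ℝ, ∃ x ∈ Metric.ball x0 ε, M < u x)
    (heq : ∀ x ≠ x0, u x = ∫ y : EuclideanSpace ℝ (Fin n),
      ‖x - y‖ ^ (-((n : ℝ) - α)) * u y ^ p) :
    (∀ x₁ x₂, ‖x₁ - x0‖ = ‖x₂ - x0‖ → u x₁ = u x₂) ∧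
    (∀ x₁ x₂, 0 < ‖x₁ - x0‖ → ‖x₁ - x0‖ ≤ ‖x₂ - x0‖ → u x₂ ≤ u x₁) := by
  rw [← finrank_euclideanSpace_fin (𝕜 := ℝ) (n := n)] at hαn hp
  simp only [← dist_eq_norm] at heq ⊢
  exact radial_symmetry_and_monotonicity_of_singular_solution_general volume hα0 hαn hp
    ⟨fun x _ => hpos x, hcont, hsing, by
      simpa only [MovingSpheres.rieszPotential, finrank_euclideanSpace_fin] using heq⟩
end

section
/- Let n be a positive integer and 0 < α < n. Suppose u is a positive function on ℝⁿ, continuous on ℝⁿ \ {x₀}, unbounded in every neighborhood of x₀, and satisfying u(x) = ∫_{ℝⁿ} |x−y|^{−(n−α)} u(y)^{(n+α)/(n−α)} dy for all x ≠ x₀. Then there exists a constant C > 0 such that u(x) ≤ C |x − x₀|^{−(n−α)/2} for all x ≠ x₀. -/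
open MeasureTheory

/-!
The proof is by moving spheres. With `k = n - α` and `p = (n + α) / (n - α)` the equation is
invariant under the Kelvin transform of weight `k` in any sphere. Subtracting the equation for the
transform `Tu` in a sphere of centre `c` and radius `R` from the one for `u` gives
`u - Tu = ∫_{|z - c| < R} (K - TK) (u ^ p - (Tu) ^ p)` with `K > TK`. A narrow-domain argument then
gives `u ≤ Tu` inside the sphere for small `R`, and as long as the sphere does not reach `x₀` the
inequality is strict, because `Tu` inherits the unboundedness of `u` while `u` stays bounded; so the
radius can be increased up to `|x₀ - c|`.

Choosing `c` as the reflection of `y` in `z` and `R = √2 |y - z|`, inversion maps `z` to `y`, and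
the comparison becomes the Harnack inequality `u z ≤ 2 ^ (k / 2) * u y` for
`|y - z| < |z - x₀| / 4`. Bounding the integral in the equation at `x` from below by its part over
the ball of radius `|x - x₀| / 4` about `x` now bounds `u x ^ (p - 1)` from above.
-/

section

open EuclideanGeometry Filter Metric Module Set Topology

theorem rpow_sub_rpow_le_mul_sub {p a b : ℝ} (hp : 1 ≤ p) (hb : 0 ≤ b) (hba : b ≤ a) :
    a ^ p - b ^ p ≤ p * a ^ (p - 1) * (a - b) := by
  rcases hba.eq_or_lt with rfl | hlt
  · simp
  · have hslope : slope (fun t : ℝ ↦ t ^ p) b a ≤ p * a ^ (p - 1) :=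
      (convexOn_rpow hp).slope_le_of_hasDerivAt hb (hb.trans hba) hlt
        (Real.hasDerivAt_rpow_const (Or.inr hp))
    rwa [slope_def_field, div_le_iff₀ (sub_pos.2 hlt)] at hslope

theorem le_rpow_inv_div_of_mul_rpow_mul_le {a q s t : ℝ} (ha : 0 < a) (hq : 0 < q) (hs : 0 < s)
    (ht : 0 ≤ t) (h : a * (s * t) ^ q ≤ 1) : t ≤ a⁻¹ ^ q⁻¹ / s := by
  rw [le_div_iff₀' hs, Real.le_rpow_inv_iff_of_pos (by positivity) (by positivity) hq]
  rwa [← one_div, le_div_iff₀' ha]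

/-- The Riesz kernel `|x - z| ^ (-k)`; on the diagonal it has the junk value `0 ^ (-k)`. -/
noncomputable def rieszKernel {X : Type*} [PseudoMetricSpace X] (k : ℝ) (x z : X) : ℝ :=
  dist x z ^ (-k)

theorem rieszKernel_nonneg {X : Type*} [PseudoMetricSpace X] (k : ℝ) (x z : X) :
    0 ≤ rieszKernel k x z :=
  Real.rpow_nonneg dist_nonneg _

theorem measurable_rieszKernel {X : Type*} [PseudoMetricSpace X] [MeasurableSpace X]
    [OpensMeasurableSpace X] (k : ℝ) (x : X) : Measurable (rieszKernel k x) :=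
  (continuous_const.dist continuous_id).measurable.pow_const _

section Inversion

variable {E : Type*} [NormedAddCommGroup E] [InnerProductSpace ℝ E]
  {k p R : ℝ} {c x z : E} {f g : E → ℝ}

theorem inversion_mem_ball_iff (hR : 0 < R) (hx : x ≠ c) :
    inversion c R x ∈ ball c R ↔ R < dist x c := by
  rw [mem_ball, dist_inversion_center, div_lt_iff₀ (dist_pos.2 hx), sq, mul_lt_mul_iff_right₀ hR]

theorem image_inversion_ball_diff_center (c : E) (hR : 0 < R) :
    inversion c R '' (ball c R \ {c}) = (closedBall c R)ᶜ := by
  have hinv := inversion_involutive c hR.ne'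
  rw [image_eq_preimage_of_inverse hinv.leftInverse hinv.rightInverse]
  ext y
  simp only [mem_preimage, Set.mem_sdiff, mem_singleton_iff, inversion_eq_center hR.ne',
    mem_compl_iff, mem_closedBall, not_le]
  constructor
  · rintro ⟨hy, hyc⟩
    exact (inversion_mem_ball_iff hR hyc).1 hy
  · intro hy
    have hyc : y ≠ c := dist_pos.1 (hR.trans hy)
    exact ⟨(inversion_mem_ball_iff hR hyc).2 hy, hyc⟩

theorem sq_dist_inversion_mul_dist_sub_sq (R : ℝ) (x : E) (hz : z ≠ c) :
    (dist x (inversion c R z) * dist z c) ^ 2 - (R * dist x z) ^ 2 =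
      (R ^ 2 - dist x c ^ 2) * (R ^ 2 - dist z c ^ 2) := by
  obtain ⟨a, rfl⟩ : ∃ a, x = a + c := ⟨x - c, by simp⟩
  obtain ⟨b, rfl⟩ : ∃ b, z = b + c := ⟨z - c, by simp⟩
  have hb : ‖b‖ ≠ 0 := by simpa using hz
  have hinv : a + c - inversion c R (b + c) = a - (R / ‖b‖) ^ 2 • b := by
    simp [inversion, dist_eq_norm]
  rw [dist_eq_norm, hinv]
  simp only [dist_eq_norm, add_sub_cancel_right, add_sub_add_right_eq_sub, mul_pow,
    norm_sub_sq_real, norm_smul, inner_smul_right, Real.norm_eq_abs, sq_abs, abs_pow]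
  field_simp
  ring

theorem mul_dist_lt_dist_inversion_mul_dist (hx : x ∈ ball c R) (hz : z ∈ ball c R) (hzc : z ≠ c) :
    R * dist x z < dist x (inversion c R z) * dist z c := by
  have hfactor {y : E} (hy : y ∈ ball c R) : 0 < R ^ 2 - dist y c ^ 2 :=
    sub_pos.2 (pow_lt_pow_left₀ hy dist_nonneg two_ne_zero)
  refine lt_of_pow_lt_pow_left₀ 2 (by positivity) (sub_pos.1 ?_)
  rw [sq_dist_inversion_mul_dist_sub_sq R x hzc]
  exact mul_pos (hfactor hx) (hfactor hz)

theorem inversion_pointReflection_sqrt_two_mul_dist {y : E} (h : y ≠ z) :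
    inversion (Equiv.pointReflection z y) (√2 * dist y z) z = y := by
  have hd : dist y z ≠ 0 := dist_ne_zero.2 h
  have hdist : dist z (Equiv.pointReflection z y) = dist y z := by
    rw [dist_comm, dist_pointReflection_left, dist_comm]
  rw [inversion, hdist, mul_div_cancel_right₀ _ hd, Real.sq_sqrt zero_le_two,
    Equiv.pointReflection_apply]
  simp only [vsub_eq_sub, vadd_eq_add, two_smul]
  abel

/-- The Kelvin transform of weight `k` of `f` with respect to the sphere of centre `c` and
radius `R`. At the centre itself it takes a junk value. -/
noncomputable def kelvinTransform (k : ℝ) (c : E) (R : ℝ) (f : E → ℝ) (x : E) : ℝ :=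
  (R / dist x c) ^ k * f (inversion c R x)

theorem kelvinTransform_nonneg (hR : 0 ≤ R) (hf : ∀ y, 0 ≤ f y) :
    0 ≤ kelvinTransform k c R f x :=
  mul_nonneg (by positivity) (hf _)

theorem kelvinTransform_add_mul (hR : 0 < R) (hx : x ≠ c) (j k : ℝ) (f g : E → ℝ) :
    kelvinTransform (j + k) c R (fun y ↦ f y * g y) x =
      kelvinTransform j c R f x * kelvinTransform k c R g x := by
  have := dist_pos.2 hx
  simp only [kelvinTransform]
  rw [Real.rpow_add (by positivity)]
  ring

theorem kelvinTransform_mul_rpow (hR : 0 ≤ R) (hf : ∀ y, 0 ≤ f y) (k p : ℝ) :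
    kelvinTransform (k * p) c R (fun y ↦ f y ^ p) x = kelvinTransform k c R f x ^ p := by
  simp only [kelvinTransform]
  rw [Real.mul_rpow (by positivity) (hf _), ← Real.rpow_mul (by positivity)]

theorem kelvinTransform_kelvinTransform (hR : 0 < R) (hx : x ≠ c) (k : ℝ) (f : E → ℝ) :
    kelvinTransform k c R (kelvinTransform k c R f) x = f x := by
  have hd := dist_pos.2 hx
  have hcancel : R / dist x c * (R / dist (inversion c R x) c) = 1 := by
    rw [dist_inversion_center]
    field_simp
  rw [kelvinTransform, kelvinTransform, inversion_inversion c hR.ne', ← mul_assoc,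
    ← Real.mul_rpow (by positivity) (by positivity), hcancel, Real.one_rpow, one_mul]

theorem continuousAt_kelvinTransform {X : Type*} [TopologicalSpace X] {r : X → ℝ} {φ : X → E}
    {a : X} (hr : ContinuousAt r a) (hφ : ContinuousAt φ a) (hra : r a ≠ 0) (hφa : φ a ≠ c)
    (hf : ContinuousAt f (inversion c (r a) (φ a))) :
    ContinuousAt (fun t ↦ kelvinTransform k c (r t) f (φ t)) a := by
  have hd : dist (φ a) c ≠ 0 := dist_ne_zero.2 hφa
  have hinv : ContinuousAt (fun t ↦ inversion c (r t) (φ t)) a :=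
    continuousAt_const.inversion hr hφ hφa
  exact ((hr.div (hφ.dist continuousAt_const) hd).rpow_const (Or.inl (div_ne_zero hra hd))).mul
    (hf.comp (f := fun t ↦ inversion c (r t) (φ t)) hinv)

theorem kelvinTransform_rieszKernel (hR : 0 ≤ R) (k : ℝ) (c x z : E) :
    kelvinTransform k c R (rieszKernel k x) z =
      R ^ k * (dist x (inversion c R z) * dist z c) ^ (-k) := by
  rw [kelvinTransform, rieszKernel, Real.div_rpow hR dist_nonneg,
    Real.mul_rpow dist_nonneg dist_nonneg, Real.rpow_neg dist_nonneg k, Real.rpow_neg dist_nonneg k]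
  ring

theorem kelvinTransform_rieszKernel_comm (hR : 0 ≤ R) (hx : x ≠ c) (hz : z ≠ c) (k : ℝ) :
    kelvinTransform k c R (fun y ↦ rieszKernel k y z) x =
      kelvinTransform k c R (rieszKernel k x) z := by
  have hsymm : (fun y ↦ rieszKernel k y z) = rieszKernel k z := by
    ext y
    rw [rieszKernel, rieszKernel, dist_comm]
  rw [hsymm, kelvinTransform_rieszKernel hR, kelvinTransform_rieszKernel hR,
    dist_comm z, dist_inversion_mul_dist_center_eq hx hz]

theorem kelvinTransform_kelvinTransform_rieszKernel (hR : 0 < R) (hx : x ≠ c) (hz : z ≠ c) (k : ℝ) :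
    kelvinTransform k c R (fun y ↦ kelvinTransform k c R (rieszKernel k y) z) x =
      rieszKernel k x z := by
  have hx' : inversion c R x ≠ c := (inversion_eq_center hR.ne').not.2 hx
  rw [kelvinTransform, ← kelvinTransform_rieszKernel_comm hR.le hx' hz]
  exact kelvinTransform_kelvinTransform hR hx k fun y ↦ rieszKernel k y z

theorem kelvinTransform_rieszKernel_lt (hk : 0 < k) (hx : x ∈ ball c R) (hz : z ∈ ball c R)
    (hzc : z ≠ c) (hxz : x ≠ z) :
    kelvinTransform k c R (rieszKernel k x) z < rieszKernel k x z := by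
  have hR : 0 < R := pos_of_mem_ball hx
  have hd : 0 < dist x z := dist_pos.2 hxz
  have hscale : rieszKernel k x z = R ^ k * (R * dist x z) ^ (-k) := by
    rw [rieszKernel, Real.mul_rpow hR.le hd.le, ← mul_assoc, ← Real.rpow_add hR, add_neg_cancel,
      Real.rpow_zero, one_mul]
  rw [kelvinTransform_rieszKernel hR.le, hscale]
  exact mul_lt_mul_of_pos_left (Real.rpow_lt_rpow_of_neg (by positivity)
    (mul_dist_lt_dist_inversion_mul_dist hx hz hzc) (neg_neg_of_pos hk)) (by positivity)

end Inversion

section ChangeOfVariables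

variable {E : Type*} [NormedAddCommGroup E] [InnerProductSpace ℝ E] {R : ℝ} {f : E → ℝ}

section

variable [MeasurableSpace E] [BorelSpace E]

theorem measurable_inversion (c : E) (R : ℝ) : Measurable (inversion c R) :=
  measurable_of_continuousOn_compl_singleton c <|
    continuousOn_const.inversion continuousOn_const continuousOn_id fun _ hx ↦ hx

theorem measurable_kelvinTransform (hf : Measurable f) (k : ℝ) (c : E) (R : ℝ) :
    Measurable (kelvinTransform k c R f) := by
  have hweight : Measurable fun x : E ↦ (R / dist x c) ^ k :=
    ((continuous_id.dist continuous_const).measurable.const_div R).pow_const k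
  exact hweight.mul (hf.comp (measurable_inversion c R))

end

variable [FiniteDimensional ℝ E]

theorem abs_det_smul_reflection (a : ℝ) (K : Submodule ℝ E) :
    |(a • (K.reflection : E →L[ℝ] E)).det| = |a| ^ finrank ℝ E := by
  have hdet : LinearMap.det ((K.reflection : E →L[ℝ] E) : E →ₗ[ℝ] E) = (-1) ^ finrank ℝ Kᗮ :=
    K.det_reflection
  rw [ContinuousLinearMap.det, ContinuousLinearMap.toLinearMap_smul, LinearMap.det_smul, hdet,
    abs_mul, abs_neg_one_pow, mul_one, abs_pow]

variable [Nontrivial E] [MeasurableSpace E] [BorelSpace E] {μ : Measure E} [μ.IsAddHaarMeasure]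

theorem integrableOn_and_setIntegral_kelvinTransform_ball (c : E) (hR : 0 < R)
    (hf : IntegrableOn f (closedBall c R)ᶜ μ) :
    IntegrableOn (kelvinTransform (2 * finrank ℝ E) c R f) (ball c R) μ ∧
      ∫ z in ball c R, kelvinTransform (2 * finrank ℝ E) c R f z ∂μ =
        ∫ z in (closedBall c R)ᶜ, f z ∂μ := by
  have hmeas : MeasurableSet (ball c R \ {c}) := measurableSet_ball.diff (measurableSet_singleton c)
  have hderiv : ∀ z ∈ ball c R \ {c}, HasFDerivWithinAt (inversion c R)
      ((R / dist z c) ^ 2 • ((ℝ ∙ (z - c))ᗮ.reflection : E →L[ℝ] E)) (ball c R \ {c}) z :=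
    fun z hz ↦ (hasFDerivAt_inversion hz.2).hasFDerivWithinAt
  have hinj : InjOn (inversion c R) (ball c R \ {c}) := (inversion_injective c hR.ne').injOn
  have hjacobian (z : E) :
      |((R / dist z c) ^ 2 • ((ℝ ∙ (z - c))ᗮ.reflection : E →L[ℝ] E)).det| • f (inversion c R z) =
        kelvinTransform (2 * finrank ℝ E) c R f z := by
    rw [abs_det_smul_reflection, abs_sq, ← pow_mul, smul_eq_mul, kelvinTransform,
      ← Real.rpow_natCast]
    push_cast
    rfl
  have hball : (ball c R \ {c} : Set E) =ᵐ[μ] ball c R :=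
    sdiff_null_ae_eq_self (measure_singleton c)
  have hintegrable := integrableOn_image_iff_integrableOn_abs_det_fderiv_smul μ hmeas hderiv hinj f
  have hintegral := integral_image_eq_integral_abs_det_fderiv_smul μ hmeas hderiv hinj f
  simp only [image_inversion_ball_diff_center c hR, hjacobian] at hintegrable hintegral
  rw [integrableOn_congr_set_ae hball] at hintegrable
  rw [setIntegral_congr_set hball] at hintegral
  exact ⟨hintegrable.1 hf, hintegral.symm⟩

theorem integral_eq_setIntegral_ball_add_kelvinTransform (c : E) (hR : 0 < R)
    (hf : Integrable f μ) :
    ∫ z, f z ∂μ = (∫ z in ball c R, f z ∂μ) +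
      ∫ z in ball c R, kelvinTransform (2 * finrank ℝ E) c R f z ∂μ := by
  have hball : (ball c R : Set E) =ᵐ[μ] closedBall c R := by
    rw [← ball_union_sphere]
    exact (union_ae_eq_left_of_ae_eq_empty (ae_eq_empty.2 (Measure.addHaar_sphere μ c R))).symm
  rw [(integrableOn_and_setIntegral_kelvinTransform_ball c hR hf.integrableOn).2,
    setIntegral_congr_set hball, integral_add_compl measurableSet_closedBall hf]

end ChangeOfVariables

section RieszPotential

variable {E : Type*} [NormedAddCommGroup E] [MeasurableSpace E] [BorelSpace E]
  {k : ℝ} {μ : Measure E}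

theorem setLIntegral_rieszKernel [μ.IsAddRightInvariant] (k : ℝ) (x : E) (s : Set E) :
    ∫⁻ z in s, ENNReal.ofReal (rieszKernel k x z) ∂μ =
      ∫⁻ z in (· + x) ⁻¹' s, ENNReal.ofReal (rieszKernel k 0 z) ∂μ := by
  rw [← (measurePreserving_add_right μ x).setLIntegral_comp_preimage_emb
    (measurableEmbedding_addRight x)]
  simp only [rieszKernel, dist_eq_norm, sub_add_cancel_right, zero_sub]

variable [NormedSpace ℝ E] [FiniteDimensional ℝ E]

theorem exists_setLIntegral_rieszKernel_zero_le (μ : Measure E) [μ.IsAddHaarMeasure] (hk : 0 < k)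
    (hkn : k < finrank ℝ E) {ε : ENNReal} (hε : ε ≠ 0) :
    ∃ δ > 0, ∀ s, μ s < δ → ∫⁻ z in s, ENNReal.ofReal (rieszKernel k 0 z) ∂μ ≤ ε := by
  set B : Set E := ball 0 1
  have hdim : 1 ≤ finrank ℝ E := by
    exact_mod_cast hk.trans hkn
  have hint : IntegrableOn (rieszKernel k 0) B μ := by
    refine integrableOn_ball_of_norm_le_rpow (C := 1) hdim hkn (ae_of_all _ fun z ↦ ?_)
      (measurable_rieszKernel k 0).aestronglyMeasurable
    rw [Real.norm_of_nonneg (rieszKernel_nonneg k 0 z), rieszKernel, dist_zero_left, one_mul]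
  obtain ⟨δ, hδ, hsmall⟩ := exists_pos_setLIntegral_lt_of_measure_lt
    hint.lintegral_lt_top.ne (ENNReal.half_pos hε).ne'
  refine ⟨min δ (ε / 2), lt_min hδ (ENNReal.half_pos hε), fun s hs ↦ ?_⟩
  have hnear : ∫⁻ z in s ∩ B, ENNReal.ofReal (rieszKernel k 0 z) ∂μ ≤ ε / 2 := by
    have hsB : μ.restrict B s < δ := (Measure.restrict_apply_le _ _).trans_lt (lt_min_iff.1 hs).1
    rw [← Measure.restrict_restrict' measurableSet_ball]
    exact (hsmall s hsB).le
  have hfar : ∫⁻ z in s \ B, ENNReal.ofReal (rieszKernel k 0 z) ∂μ ≤ ε / 2 := by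
    calc ∫⁻ z in s \ B, ENNReal.ofReal (rieszKernel k 0 z) ∂μ
        ≤ ∫⁻ _ in s \ B, 1 ∂μ := by
          refine setLIntegral_mono measurable_const fun z hz ↦ ENNReal.ofReal_le_one.2 ?_
          have hz1 : 1 ≤ dist 0 z := by simpa [B, dist_comm] using hz.2
          exact Real.rpow_le_one_of_one_le_of_nonpos hz1 (neg_nonpos.2 hk.le)
      _ ≤ μ s := by
          rw [setLIntegral_one]
          exact measure_mono sdiff_subset
      _ ≤ ε / 2 := (lt_min_iff.1 hs).2.le
  calc ∫⁻ z in s, ENNReal.ofReal (rieszKernel k 0 z) ∂μ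
      = ∫⁻ z in s ∩ B, ENNReal.ofReal (rieszKernel k 0 z) ∂μ +
          ∫⁻ z in s \ B, ENNReal.ofReal (rieszKernel k 0 z) ∂μ :=
        (lintegral_inter_add_sdiff _ _ measurableSet_ball).symm
    _ ≤ ε / 2 + ε / 2 := add_le_add hnear hfar
    _ = ε := ENNReal.add_halves ε

theorem exists_setIntegral_rieszKernel_le (μ : Measure E) [μ.IsAddHaarMeasure] (hk : 0 < k)
    (hkn : k < finrank ℝ E) {ε : ℝ} (hε : 0 < ε) :
    ∃ δ > 0, ∀ s, μ s < δ → ∀ x,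
      IntegrableOn (rieszKernel k x) s μ ∧ ∫ z in s, rieszKernel k x z ∂μ ≤ ε := by
  obtain ⟨δ, hδ, hzero⟩ :=
    exists_setLIntegral_rieszKernel_zero_le μ hk hkn (ENNReal.ofReal_pos.2 hε).ne'
  refine ⟨δ, hδ, fun s hs x ↦ ?_⟩
  have hle : ∫⁻ z in s, ENNReal.ofReal (rieszKernel k x z) ∂μ ≤ ENNReal.ofReal ε := by
    rw [setLIntegral_rieszKernel]
    exact hzero _ (by rwa [measure_preimage_add_right])
  have hnonneg : 0 ≤ᵐ[μ.restrict s] rieszKernel k x := ae_of_all _ (rieszKernel_nonneg k x)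
  have hmeas : AEStronglyMeasurable (rieszKernel k x) (μ.restrict s) :=
    (measurable_rieszKernel k x).aestronglyMeasurable
  refine ⟨⟨hmeas, ?_⟩, ?_⟩
  · rw [hasFiniteIntegral_iff_ofReal hnonneg]
    exact hle.trans_lt ENNReal.ofReal_lt_top
  · rw [integral_eq_lintegral_of_nonneg_ae hnonneg hmeas]
    exact ENNReal.toReal_le_of_le_ofReal hε.le hle

end RieszPotential

theorem ae_restrict_mem_sdiff_of_countable {X : Type*} [MeasurableSpace X] {μ : Measure X}
    [NullSingletonClass μ] {s t : Set X} (hs : MeasurableSet s) (ht : t.Countable) :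
    ∀ᵐ z ∂μ.restrict s, z ∈ s \ t := by
  filter_upwards [ae_restrict_mem hs, ae_restrict_of_ae (ht.ae_notMem μ)] with z hzs hzt
  exact ⟨hzs, hzt⟩

section CriticalSolution

variable {E : Type*} [NormedAddCommGroup E] [InnerProductSpace ℝ E]

/-- `u` is unbounded in every neighbourhood of `o`. -/
def IsSingularAt (u : E → ℝ) (o : E) : Prop :=
  ∀ ε > (0 : ℝ), ∀ M : ℝ, ∃ x ∈ ball o ε, M < u x

/-- `u` is a positive solution of `u(x) = ∫ |x - y|^{-k} u(y)^p dμ(y)` on the complement of `o`.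
With `n = dim E` and `k = n - α`, the relation `k + k p = 2 n` says that `p = (n + α) / (n - α)`;
it is what makes the equation invariant under Kelvin transforms of weight `k`. -/
structure IsCriticalSolution [MeasurableSpace E] (μ : Measure E) (k p : ℝ) (o : E) (u : E → ℝ) :
    Prop where
  k_pos : 0 < k
  k_lt : k < finrank ℝ E
  k_add_k_mul_p : k + k * p = 2 * finrank ℝ E
  pos : ∀ x, 0 < u x
  continuousOn : ContinuousOn u {o}ᶜ
  eq_integral : ∀ x ≠ o, u x = ∫ y, rieszKernel k x y * u y ^ p ∂μ

/-- The points of the ball where the moving-sphere comparison of `u` with its Kelvin transform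
fails. The centre, where the Kelvin transform is junk, and the reflection of the singular point `o`,
where it involves the meaningless value `u o`, are left out. -/
def exceedanceSet (k : ℝ) (o c : E) (R : ℝ) (u : E → ℝ) : Set E :=
  {x ∈ ball c R \ {c, inversion c R o} | kelvinTransform k c R u x < u x}

variable {k p r R L M A : ℝ} {o c x z : E} {u : E → ℝ}

theorem le_kelvinTransform_of_exceedanceSet_eq_empty (hdom : exceedanceSet k o c R u = ∅)
    (hx : x ∈ ball c R \ {c, inversion c R o}) : u x ≤ kelvinTransform k c R u x :=
  le_of_not_gt fun hlt ↦ (hdom.subset ⟨hx, hlt⟩ : x ∈ (∅ : Set E))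

theorem eventually_notMem_exceedanceSet_of_lt_dist (hx : r < dist x c) :
    ∀ᶠ R in 𝓝 r, x ∉ exceedanceSet k o c R u := by
  filter_upwards [gt_mem_nhds hx] with R hR hmem
  exact hR.not_gt hmem.1.1

namespace IsCriticalSolution

variable [MeasurableSpace E] {μ : Measure E}

theorem one_lt_p (h : IsCriticalSolution μ k p o u) : 1 < p := by
  have hprod : 0 < k * (p - 1) := by linarith [h.k_lt, h.k_add_k_mul_p]
  exact sub_pos.1 ((mul_pos_iff_of_pos_left h.k_pos).1 hprod)

theorem p_pos (h : IsCriticalSolution μ k p o u) : 0 < p :=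
  one_pos.trans h.one_lt_p

theorem integrable (h : IsCriticalSolution μ k p o u) (hx : x ≠ o) :
    Integrable (fun y ↦ rieszKernel k x y * u y ^ p) μ :=
  not_imp_comm.1 integral_undef (h.eq_integral x hx ▸ h.pos x).ne'

theorem continuousAt (h : IsCriticalSolution μ k p o u) (hx : x ≠ o) : ContinuousAt u x :=
  h.continuousOn.continuousAt (isOpen_compl_singleton.mem_nhds hx)

theorem continuousAt_kelvinTransform_radius (h : IsCriticalSolution μ k p o u) (hR : 0 < R)
    (hx : x ∉ ({c, inversion c R o} : Set E)) :
    ContinuousAt (fun s ↦ kelvinTransform k c s u x) R := by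
  simp only [mem_insert_iff, mem_singleton_iff, not_or] at hx
  exact continuousAt_kelvinTransform continuousAt_id continuousAt_const hR.ne' hx.1
    (h.continuousAt ((inversion_involutive c hR.ne').eq_iff.not.2 hx.2))

theorem continuousAt_kelvinTransform_point (h : IsCriticalSolution μ k p o u) (hR : 0 < R)
    (hx : x ∉ ({c, inversion c R o} : Set E)) :
    ContinuousAt (kelvinTransform k c R u) x := by
  simp only [mem_insert_iff, mem_singleton_iff, not_or] at hx
  exact continuousAt_kelvinTransform continuousAt_const continuousAt_id hR.ne' hx.1
    (h.continuousAt ((inversion_involutive c hR.ne').eq_iff.not.2 hx.2))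

theorem eventually_mem_exceedanceSet (h : IsCriticalSolution μ k p o u) (hR : 0 < R)
    (hx : x ∈ exceedanceSet k o c R u) : ∀ᶠ s in 𝓝 R, x ∈ exceedanceSet k o c s u := by
  obtain ⟨⟨hball, hne⟩, hlt⟩ := hx
  simp only [mem_insert_iff, mem_singleton_iff, not_or] at hne
  have hreflection : Continuous fun s ↦ inversion c s o := by
    unfold inversion
    fun_prop
  filter_upwards [lt_mem_nhds hball, hreflection.continuousAt.eventually_ne (Ne.symm hne.2),
    (h.continuousAt_kelvinTransform_radius hR (by simpa using hne)).eventually (gt_mem_nhds hlt)]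
    with s hs hsi hslt
  exact ⟨⟨hs, by simpa using ⟨hne.1, hsi.symm⟩⟩, hslt⟩

theorem isClosed_setOf_exceedanceSet_eq_empty (h : IsCriticalSolution μ k p o u) (hr : 0 < r)
    (c : E) : IsClosed ({R | exceedanceSet k o c R u = ∅} ∩ Icc r L) := by
  refine isClosed_of_closure_subset fun R hR ↦ ?_
  have hRI : R ∈ Icc r L := isClosed_Icc.closure_subset_iff.2 inter_subset_right hR
  refine ⟨eq_empty_of_forall_notMem fun x hx ↦ ?_, hRI⟩
  obtain ⟨s, ⟨hs, -⟩, hxs⟩ := ((mem_closure_iff_frequently.1 hR).and_eventually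
    (h.eventually_mem_exceedanceSet (hr.trans_le hRI.1) hx)).exists
  exact hs.subset hxs

theorem kelvinTransform_rieszKernel_mul_rpow (h : IsCriticalSolution μ k p o u) (hR : 0 < R)
    (hz : z ≠ c) (x : E) :
    kelvinTransform (2 * finrank ℝ E) c R (fun y ↦ rieszKernel k x y * u y ^ p) z =
      kelvinTransform k c R (rieszKernel k x) z * kelvinTransform k c R u z ^ p := by
  rw [← h.k_add_k_mul_p, kelvinTransform_add_mul hR hz,
    kelvinTransform_mul_rpow hR.le fun y ↦ (h.pos y).le]

theorem exists_forall_closedBall_le [ProperSpace E] (h : IsCriticalSolution μ k p o u)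
    (hL : L < dist o c) : ∃ M > 0, ∀ z ∈ closedBall c L, u z ≤ M := by
  have hsub : closedBall c L ⊆ {o}ᶜ := by
    rintro z hz rfl
    exact hL.not_ge hz
  obtain ⟨M, hM⟩ := (isCompact_closedBall c L).bddAbove_image (h.continuousOn.mono hsub)
  exact ⟨max M 1, by positivity, fun z hz ↦ (hM ⟨z, hz, rfl⟩).trans (le_max_left M 1)⟩

theorem exists_lt_kelvinTransform [ProperSpace E] (h : IsCriticalSolution μ k p o u)
    (hu : IsSingularAt u o) (hR : 0 < R) (hRo : R < dist o c) :
    ∃ z ∈ ball c R \ {c, inversion c R o}, u z < kelvinTransform k c R u z := by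
  obtain ⟨M, -, huM⟩ := h.exists_forall_closedBall_le hRo
  obtain ⟨y, hy, hyM⟩ := hu (dist o c - R) (sub_pos.2 hRo) (max M (u o))
  obtain ⟨hMy, hoy⟩ := max_lt_iff.1 hyM
  have hyo : y ≠ o := by
    rintro rfl
    exact hoy.false
  have hRy : R < dist y c := by
    have htriangle := dist_triangle_left o c y
    rw [mem_ball] at hy
    linarith
  have hyc : y ≠ c := dist_pos.1 (hR.trans hRy)
  have hball : inversion c R y ∈ ball c R := (inversion_mem_ball_iff hR hyc).2 hRy
  refine ⟨inversion c R y, ⟨hball, ?_⟩, ?_⟩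
  · rintro (hc | hinv)
    · exact hyc ((inversion_eq_center hR.ne').1 hc)
    · exact hyo (inversion_injective c hR.ne' hinv)
  · have hweight : 1 ≤ (R / dist (inversion c R y) c) ^ k :=
      Real.one_le_rpow ((one_le_div (dist_pos.2 ((inversion_eq_center hR.ne').not.2 hyc))).2
        (le_of_lt hball)) h.k_pos.le
    calc u (inversion c R y) ≤ M := huM _ (ball_subset_closedBall hball)
      _ < u y := hMy
      _ ≤ (R / dist (inversion c R y) c) ^ k * u y := le_mul_of_one_le_left (h.pos y).le hweight
      _ = kelvinTransform k c R u (inversion c R y) := by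
          rw [kelvinTransform, inversion_inversion c hR.ne']

theorem measure_setOf_lt_kelvinTransform_pos [ProperSpace E] [μ.IsOpenPosMeasure]
    (h : IsCriticalSolution μ k p o u) (hu : IsSingularAt u o) (hR : 0 < R) (hRo : R < dist o c) :
    0 < μ {z ∈ ball c R \ {c, inversion c R o} | u z < kelvinTransform k c R u z} := by
  obtain ⟨z, hz, hlt⟩ := h.exists_lt_kelvinTransform hu hR hRo
  have hzo : z ≠ o := by
    rintro rfl
    exact hRo.not_gt hz.1
  refine μ.measure_pos_of_mem_nhds (x := z) (inter_mem ?_ ?_)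
  · exact (isOpen_ball.sdiff (toFinite _).isClosed).mem_nhds hz
  · exact (h.continuousAt hzo).eventually_lt (h.continuousAt_kelvinTransform_point hR hz.2) hlt

theorem sub_mul_sub_le_indicator_exceedanceSet (h : IsCriticalSolution μ k p o u)
    (hx : x ∈ ball c R) (hM : ∀ z ∈ ball c R, u z ≤ M)
    (hA : ∀ z ∈ exceedanceSet k o c R u, u z - kelvinTransform k c R u z ≤ A)
    (hz : z ∈ ball c R \ {c, inversion c R o}) (hxz : x ≠ z) :
    (rieszKernel k x z - kelvinTransform k c R (rieszKernel k x) z) *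
        (u z ^ p - kelvinTransform k c R u z ^ p) ≤
      (exceedanceSet k o c R u).indicator
        (fun z ↦ rieszKernel k x z * (p * M ^ (p - 1) * A)) z := by
  have hR : 0 < R := pos_of_mem_ball hx
  have hzc : z ≠ c := fun hzc ↦ hz.2 (Or.inl hzc)
  have hp := h.p_pos
  have huz := h.pos z
  have hTu : 0 ≤ kelvinTransform k c R u z := kelvinTransform_nonneg hR.le fun y ↦ (h.pos y).le
  have hTK : 0 ≤ kelvinTransform k c R (rieszKernel k x) z :=
    kelvinTransform_nonneg hR.le (rieszKernel_nonneg k x)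
  have hkernel := kelvinTransform_rieszKernel_lt h.k_pos hx hz.1 hzc hxz
  by_cases hmem : z ∈ exceedanceSet k o c R u
  · have hlt := hmem.2
    have hpow : u z ^ p - kelvinTransform k c R u z ^ p ≤ p * M ^ (p - 1) * A :=
      calc u z ^ p - kelvinTransform k c R u z ^ p
          ≤ p * u z ^ (p - 1) * (u z - kelvinTransform k c R u z) :=
            rpow_sub_rpow_le_mul_sub h.one_lt_p.le hTu hlt.le
        _ ≤ p * M ^ (p - 1) * A := by
            have hpM : u z ^ (p - 1) ≤ M ^ (p - 1) :=
              Real.rpow_le_rpow huz.le (hM z hz.1) (sub_pos.2 h.one_lt_p).le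
            have hM0 : 0 < M := huz.trans_le (hM z hz.1)
            exact mul_le_mul (mul_le_mul_of_nonneg_left hpM hp.le) (hA z hmem)
              (sub_pos.2 hlt).le (by positivity)
    rw [indicator_of_mem hmem]
    exact mul_le_mul (sub_le_self _ hTK) hpow
      (sub_nonneg.2 (Real.rpow_le_rpow hTu hlt.le hp.le)) (rieszKernel_nonneg k x z)
  · have hle : u z ≤ kelvinTransform k c R u z := le_of_not_gt fun hlt ↦ hmem ⟨hz, hlt⟩
    rw [indicator_of_notMem hmem]
    exact mul_nonpos_of_nonneg_of_nonpos (sub_pos.2 hkernel).le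
      (sub_nonpos.2 (Real.rpow_le_rpow huz.le hle hp.le))

section Measure

variable [BorelSpace E]

theorem measurable (h : IsCriticalSolution μ k p o u) : Measurable u :=
  measurable_of_continuousOn_compl_singleton o h.continuousOn

theorem measurableSet_exceedanceSet (h : IsCriticalSolution μ k p o u) (c : E) (R : ℝ) :
    MeasurableSet (exceedanceSet k o c R u) :=
  (measurableSet_ball.diff (toFinite _).measurableSet).inter
    (measurableSet_lt (measurable_kelvinTransform h.measurable k c R) h.measurable)

theorem tendsto_measure_exceedanceSet [ProperSpace E] [IsFiniteMeasureOnCompacts μ]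
    (h : IsCriticalSolution μ k p o u)
    (hae : ∀ᵐ x ∂μ, ∀ᶠ R in 𝓝[>] r, x ∉ exceedanceSet k o c R u) :
    Tendsto (fun R ↦ μ (exceedanceSet k o c R u)) (𝓝[>] r) (𝓝 0) := by
  rw [← measure_empty (μ := μ)]
  refine tendsto_measure_of_ae_tendsto_indicator (B := ball c (r + 1)) (𝓝[>] r)
    MeasurableSet.empty (h.measurableSet_exceedanceSet c) measurableSet_ball
    measure_ball_lt_top.ne ?_ ?_
  · filter_upwards [nhdsWithin_le_nhds (gt_mem_nhds (lt_add_one r))] with R hR z hz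
    exact ball_subset_ball hR.le hz.1.1
  · filter_upwards [hae] with x hx
    filter_upwards [hx] with R hR
    simp only [hR, mem_empty_iff_false]

variable [FiniteDimensional ℝ E] [Nontrivial E] [μ.IsAddHaarMeasure]

theorem integrableOn_and_eq_add (h : IsCriticalSolution μ k p o u) (hR : 0 < R) (c : E)
    (hx : x ≠ o) :
    IntegrableOn (fun z ↦ rieszKernel k x z * u z ^ p) (ball c R) μ ∧
    IntegrableOn (fun z ↦ kelvinTransform k c R (rieszKernel k x) z *
      kelvinTransform k c R u z ^ p) (ball c R) μ ∧
    u x = (∫ z in ball c R, rieszKernel k x z * u z ^ p ∂μ) +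
      ∫ z in ball c R, kelvinTransform k c R (rieszKernel k x) z *
        kelvinTransform k c R u z ^ p ∂μ := by
  have hae : kelvinTransform (2 * finrank ℝ E) c R (fun y ↦ rieszKernel k x y * u y ^ p)
      =ᵐ[μ.restrict (ball c R)] fun z ↦
        kelvinTransform k c R (rieszKernel k x) z * kelvinTransform k c R u z ^ p := by
    filter_upwards [ae_restrict_mem_sdiff_of_countable measurableSet_ball (countable_singleton c)]
      with z hz
    exact h.kelvinTransform_rieszKernel_mul_rpow hR hz.2 x
  have hint := h.integrable hx
  refine ⟨hint.integrableOn, (integrable_congr hae).1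
    (integrableOn_and_setIntegral_kelvinTransform_ball c hR hint.integrableOn).1, ?_⟩
  rw [← integral_congr_ae hae, ← integral_eq_setIntegral_ball_add_kelvinTransform c hR hint,
    ← h.eq_integral x hx]

theorem integrableOn_and_kelvinTransform_eq_add (h : IsCriticalSolution μ k p o u) (hR : 0 < R)
    (hxc : x ≠ c) (hxi : inversion c R x ≠ o) :
    IntegrableOn (fun z ↦ kelvinTransform k c R (rieszKernel k x) z * u z ^ p) (ball c R) μ ∧
    IntegrableOn (fun z ↦ rieszKernel k x z * kelvinTransform k c R u z ^ p) (ball c R) μ ∧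
    kelvinTransform k c R u x =
      (∫ z in ball c R, kelvinTransform k c R (rieszKernel k x) z * u z ^ p ∂μ) +
        ∫ z in ball c R, rieszKernel k x z * kelvinTransform k c R u z ^ p ∂μ := by
  obtain ⟨hint, hint', heq⟩ := h.integrableOn_and_eq_add hR c hxi
  have hne := ae_restrict_mem_sdiff_of_countable (μ := μ) measurableSet_ball
    (countable_singleton c) (s := ball c R)
  have hae : (fun z ↦ (R / dist x c) ^ k * (rieszKernel k (inversion c R x) z * u z ^ p))
      =ᵐ[μ.restrict (ball c R)] fun z ↦ kelvinTransform k c R (rieszKernel k x) z * u z ^ p := by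
    filter_upwards [hne] with z hz
    rw [← kelvinTransform_rieszKernel_comm hR.le hxc hz.2, kelvinTransform, mul_assoc]
  have hae' : (fun z ↦ (R / dist x c) ^ k * (kelvinTransform k c R
      (rieszKernel k (inversion c R x)) z * kelvinTransform k c R u z ^ p))
      =ᵐ[μ.restrict (ball c R)] fun z ↦ rieszKernel k x z * kelvinTransform k c R u z ^ p := by
    filter_upwards [hne] with z hz
    rw [← kelvinTransform_kelvinTransform_rieszKernel hR hxc hz.2, ← mul_assoc]
    rfl
  refine ⟨(integrable_congr hae).1 (hint.const_mul _),
    (integrable_congr hae').1 (hint'.const_mul _), ?_⟩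
  rw [← integral_congr_ae hae, ← integral_congr_ae hae', integral_const_mul, integral_const_mul,
    ← mul_add, ← heq, kelvinTransform]

theorem integrableOn_and_sub_kelvinTransform_eq (h : IsCriticalSolution μ k p o u) (hR : 0 < R)
    (hxo : x ≠ o) (hxc : x ≠ c) (hxi : x ≠ inversion c R o) :
    IntegrableOn (fun z ↦ (rieszKernel k x z - kelvinTransform k c R (rieszKernel k x) z) *
      (u z ^ p - kelvinTransform k c R u z ^ p)) (ball c R) μ ∧
    u x - kelvinTransform k c R u x =
      ∫ z in ball c R, (rieszKernel k x z - kelvinTransform k c R (rieszKernel k x) z) *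
        (u z ^ p - kelvinTransform k c R u z ^ p) ∂μ := by
  obtain ⟨hKu, hTT, hu⟩ := h.integrableOn_and_eq_add hR c hxo
  obtain ⟨hTu, hKT, hTux⟩ := h.integrableOn_and_kelvinTransform_eq_add hR hxc
    ((inversion_involutive c hR.ne').eq_iff.not.2 hxi)
  have hexpand : (fun z ↦ (rieszKernel k x z - kelvinTransform k c R (rieszKernel k x) z) *
      (u z ^ p - kelvinTransform k c R u z ^ p)) = fun z ↦
      (rieszKernel k x z * u z ^ p +
        kelvinTransform k c R (rieszKernel k x) z * kelvinTransform k c R u z ^ p) -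
      (kelvinTransform k c R (rieszKernel k x) z * u z ^ p +
        rieszKernel k x z * kelvinTransform k c R u z ^ p) := by
    ext z
    ring
  rw [hexpand]
  refine ⟨(hKu.add hTT).sub (hTu.add hKT), ?_⟩
  have hsub := integral_sub (hKu.add hTT) (hTu.add hKT)
  simp only [Pi.add_apply] at hsub
  rw [hsub, integral_add hKu hTT, integral_add hTu hKT, ← hu, ← hTux]

theorem sub_kelvinTransform_le (h : IsCriticalSolution μ k p o u)
    (hx : x ∈ exceedanceSet k o c R u) (hxo : x ≠ o) (hM : ∀ z ∈ ball c R, u z ≤ M)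
    (hA : ∀ z ∈ exceedanceSet k o c R u, u z - kelvinTransform k c R u z ≤ A)
    (hint : IntegrableOn (rieszKernel k x) (exceedanceSet k o c R u) μ) :
    u x - kelvinTransform k c R u x ≤
      (∫ z in exceedanceSet k o c R u, rieszKernel k x z ∂μ) * (p * M ^ (p - 1) * A) := by
  have hxball := hx.1.1
  have hne := hx.1.2
  simp only [mem_insert_iff, mem_singleton_iff, not_or] at hne
  have hmeas := h.measurableSet_exceedanceSet c R
  obtain ⟨hdiff, heq⟩ :=
    h.integrableOn_and_sub_kelvinTransform_eq (pos_of_mem_ball hxball) hxo hne.1 hne.2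
  calc u x - kelvinTransform k c R u x
      = ∫ z in ball c R, (rieszKernel k x z - kelvinTransform k c R (rieszKernel k x) z) *
          (u z ^ p - kelvinTransform k c R u z ^ p) ∂μ := heq
    _ ≤ ∫ z in ball c R, (exceedanceSet k o c R u).indicator
          (fun z ↦ rieszKernel k x z * (p * M ^ (p - 1) * A)) z ∂μ := by
        refine integral_mono_ae hdiff
          ((integrable_indicator_iff hmeas).2 (hint.mul_const _)).integrableOn ?_
        filter_upwards [ae_restrict_mem_sdiff_of_countable measurableSet_ball
          (toFinite {x, c, inversion c R o}).countable] with z ⟨hzball, hz⟩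
        exact h.sub_mul_sub_le_indicator_exceedanceSet hxball hM hA
          ⟨hzball, fun hz' ↦ hz (Or.inr hz')⟩ fun hxz ↦ hz (Or.inl hxz.symm)
    _ = (∫ z in exceedanceSet k o c R u, rieszKernel k x z ∂μ) * (p * M ^ (p - 1) * A) := by
        rw [setIntegral_indicator hmeas, inter_eq_self_of_subset_right fun z hz ↦ hz.1.1,
          integral_mul_const]

theorem exists_exceedanceSet_eq_empty_of_measure_lt (h : IsCriticalSolution μ k p o u)
    (hL : L < dist o c) :
    ∃ δ > 0, ∀ R ≤ L, μ (exceedanceSet k o c R u) < δ → exceedanceSet k o c R u = ∅ := by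
  obtain ⟨M, hM, huM⟩ := h.exists_forall_closedBall_le hL
  have hp := h.p_pos
  obtain ⟨δ, hδ, hsmall⟩ := exists_setIntegral_rieszKernel_le μ h.k_pos h.k_lt
    (ε := 1 / (2 * (p * M ^ (p - 1)))) (by positivity)
  refine ⟨δ, hδ, fun R hRL hμ ↦ not_nonempty_iff_eq_empty.1 ?_⟩
  rintro ⟨y, hy⟩
  have hR : 0 < R := pos_of_mem_ball hy.1.1
  have hballM : ∀ z ∈ ball c R, u z ≤ M := fun z hz ↦
    huM z (ball_subset_closedBall (ball_subset_ball hRL hz))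
  set S : Set ℝ := (fun z ↦ u z - kelvinTransform k c R u z) '' exceedanceSet k o c R u
  have hbdd : BddAbove S := by
    refine ⟨M, forall_mem_image.2 fun z hz ↦ ?_⟩
    exact (sub_le_self _ (kelvinTransform_nonneg hR.le fun y ↦ (h.pos y).le)).trans
      (hballM z hz.1.1)
  have hle : ∀ z ∈ exceedanceSet k o c R u, u z - kelvinTransform k c R u z ≤ sSup S :=
    fun z hz ↦ le_csSup hbdd (mem_image_of_mem _ hz)
  have hpos : 0 < sSup S := (sub_pos.2 hy.2).trans_le (hle y hy)
  have hhalf : sSup S ≤ sSup S / 2 := by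
    refine csSup_le ⟨_, mem_image_of_mem _ hy⟩ (forall_mem_image.2 fun z hz ↦ ?_)
    have hzo : z ≠ o := by
      rintro rfl
      exact (hz.1.1.trans_le hRL).not_gt hL
    obtain ⟨hint, hε⟩ := hsmall _ hμ z
    calc u z - kelvinTransform k c R u z
        ≤ (∫ w in exceedanceSet k o c R u, rieszKernel k z w ∂μ) * (p * M ^ (p - 1) * sSup S) :=
          h.sub_kelvinTransform_le hz hzo hballM hle hint
      _ ≤ 1 / (2 * (p * M ^ (p - 1))) * (p * M ^ (p - 1) * sSup S) := by gcongr
      _ = sSup S / 2 := by field_simp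
  exact hhalf.not_gt (half_lt_self hpos)

theorem lt_kelvinTransform_of_exceedanceSet_eq_empty (h : IsCriticalSolution μ k p o u)
    (hu : IsSingularAt u o) (hRo : R < dist o c) (hdom : exceedanceSet k o c R u = ∅)
    (hx : x ∈ ball c R \ {c, inversion c R o}) : u x < kelvinTransform k c R u x := by
  have hR : 0 < R := pos_of_mem_ball hx.1
  have hne := hx.2
  simp only [mem_insert_iff, mem_singleton_iff, not_or] at hne
  have hxo : x ≠ o := by
    rintro rfl
    exact hRo.not_gt hx.1
  obtain ⟨hint, heq⟩ := h.integrableOn_and_sub_kelvinTransform_eq hR hxo hne.1 hne.2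
  set F : E → ℝ := fun z ↦ (rieszKernel k x z - kelvinTransform k c R (rieszKernel k x) z) *
    (u z ^ p - kelvinTransform k c R u z ^ p)
  have hkernel : ∀ z ∈ ball c R \ {c, inversion c R o}, x ≠ z →
      0 < rieszKernel k x z - kelvinTransform k c R (rieszKernel k x) z := fun z hz hxz ↦
    sub_pos.2 (kelvinTransform_rieszKernel_lt h.k_pos hx.1 hz.1 (fun hzc ↦ hz.2 (Or.inl hzc)) hxz)
  have hnonneg : 0 ≤ᵐ[μ.restrict (ball c R)] fun z ↦ -F z := by
    filter_upwards [ae_restrict_mem_sdiff_of_countable measurableSet_ball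
      (toFinite {x, c, inversion c R o}).countable] with z ⟨hzball, hz⟩
    have hz' : z ∈ ball c R \ {c, inversion c R o} := ⟨hzball, fun hz' ↦ hz (Or.inr hz')⟩
    exact neg_nonneg.2 <| mul_nonpos_of_nonneg_of_nonpos
      (hkernel z hz' fun hxz ↦ hz (Or.inl hxz.symm)).le <| sub_nonpos.2 <|
        Real.rpow_le_rpow (h.pos z).le (le_kelvinTransform_of_exceedanceSet_eq_empty hdom hz')
          h.p_pos.le
  have hsupport : {z ∈ ball c R \ {c, inversion c R o} | u z < kelvinTransform k c R u z} \ {x} ⊆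
      (Function.support fun z ↦ -F z) ∩ ball c R := by
    rintro z ⟨⟨hz, hlt⟩, hzx⟩
    exact ⟨neg_ne_zero.2 (mul_ne_zero (hkernel z hz (Ne.symm hzx)).ne'
      (sub_neg.2 (Real.rpow_lt_rpow (h.pos z).le hlt h.p_pos)).ne), hz.1⟩
  have hpos : 0 < ∫ z in ball c R, -F z ∂μ := by
    refine (setIntegral_pos_iff_support_of_nonneg_ae hnonneg hint.neg).2
      (lt_of_lt_of_le ?_ (measure_mono hsupport))
    rw [measure_sdiff_null (measure_singleton x)]
    exact h.measure_setOf_lt_kelvinTransform_pos hu hR hRo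
  rw [integral_neg, ← heq] at hpos
  exact sub_neg.1 (neg_pos.1 hpos)

theorem eventually_notMem_exceedanceSet (h : IsCriticalSolution μ k p o u)
    (hu : IsSingularAt u o) (hr : 0 < r) (hro : r < dist o c)
    (hdom : exceedanceSet k o c r u = ∅)
    (hx : x ∉ ({c, inversion c r o} : Set E)) (hxs : x ∉ sphere c r) :
    ∀ᶠ R in 𝓝 r, x ∉ exceedanceSet k o c R u := by
  rcases lt_or_gt_of_ne hxs with hlt | hgt
  · have hstrict := h.lt_kelvinTransform_of_exceedanceSet_eq_empty hu hro hdom ⟨hlt, hx⟩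
    filter_upwards [(h.continuousAt_kelvinTransform_radius hr hx).eventually (lt_mem_nhds hstrict)]
      with R hR hmem
    exact hmem.2.not_gt hR
  · exact eventually_notMem_exceedanceSet_of_lt_dist hgt

theorem eventually_exceedanceSet_eq_empty (h : IsCriticalSolution μ k p o u)
    (hr : r < dist o c) (hae : ∀ᵐ x ∂μ, ∀ᶠ R in 𝓝[>] r, x ∉ exceedanceSet k o c R u) :
    ∀ᶠ R in 𝓝[>] r, exceedanceSet k o c R u = ∅ := by
  obtain ⟨L, hrL, hL⟩ := exists_between hr
  obtain ⟨δ, hδ, hempty⟩ := h.exists_exceedanceSet_eq_empty_of_measure_lt hL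
  filter_upwards [(h.tendsto_measure_exceedanceSet hae).eventually (gt_mem_nhds hδ),
    nhdsWithin_le_nhds (gt_mem_nhds hrL)] with R hμ hR
  exact hempty R hR.le hμ

theorem exceedanceSet_eq_empty (h : IsCriticalSolution μ k p o u) (hu : IsSingularAt u o)
    (hR : 0 < R) (hRo : R < dist o c) : exceedanceSet k o c R u = ∅ := by
  have hstart : ∀ᶠ s in 𝓝[>] (0 : ℝ), exceedanceSet k o c s u = ∅ := by
    refine h.eventually_exceedanceSet_eq_empty (hR.trans hRo) ?_
    filter_upwards [(countable_singleton c).ae_notMem μ] with x hx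
    exact nhdsWithin_le_nhds (eventually_notMem_exceedanceSet_of_lt_dist (dist_pos.2 hx))
  obtain ⟨r, ⟨hempty, hrR⟩, hr⟩ := ((hstart.and (nhdsWithin_le_nhds (gt_mem_nhds hR))).and
    self_mem_nhdsWithin).exists
  refine (h.isClosed_setOf_exceedanceSet_eq_empty hr c).Icc_subset_of_forall_mem_nhdsWithin
    hempty ?_ ⟨hrR.le, le_rfl⟩
  rintro s ⟨hdom, hrs, hsR⟩
  refine h.eventually_exceedanceSet_eq_empty (hsR.trans hRo) ?_
  filter_upwards [(toFinite {c, inversion c s o}).countable.ae_notMem μ,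
    measure_eq_zero_iff_ae_notMem.1 (Measure.addHaar_sphere μ c s)] with x hx hxs
  exact nhdsWithin_le_nhds
    (h.eventually_notMem_exceedanceSet hu (hr.trans_le hrs) (hsR.trans hRo) hdom hx hxs)

theorem le_two_rpow_mul (h : IsCriticalSolution μ k p o u) (hu : IsSingularAt u o)
    {y : E} (hy : y ∈ ball z (dist z o / 4)) : u z ≤ 2 ^ (k / 2) * u y := by
  rcases eq_or_ne y z with rfl | hyz
  · exact le_mul_of_one_le_left (h.pos y).le
      (Real.one_le_rpow one_le_two (half_pos h.k_pos).le)
  set c := Equiv.pointReflection z y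
  have hd : 0 < dist y z := dist_pos.2 hyz
  have hzc : dist z c = dist y z := by
    rw [dist_comm, dist_pointReflection_left, dist_comm]
  have hinv : inversion c (√2 * dist y z) z = y := inversion_pointReflection_sqrt_two_mul_dist hyz
  have hsqrt : √2 < 2 := by
    rw [Real.sqrt_lt'] <;> norm_num
  have hyo : y ≠ o := by
    rintro rfl
    rw [mem_ball, dist_comm z] at hy
    linarith
  have hRo : √2 * dist y z < dist o c := by
    have htriangle := dist_triangle_right z o c
    rw [mem_ball] at hy
    nlinarith
  have hz : z ∈ ball c (√2 * dist y z) \ {c, inversion c (√2 * dist y z) o} := by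
    refine ⟨?_, ?_⟩
    · rw [mem_ball, hzc]
      exact lt_mul_of_one_lt_left hd Real.one_lt_sqrt_two
    · rintro (hzc' | hzo)
      · exact hd.ne' (hzc ▸ dist_eq_zero.2 hzc')
      · exact hyo (hinv.symm.trans ((inversion_involutive c (by positivity)).eq_iff.2 hzo))
  calc u z ≤ kelvinTransform k c (√2 * dist y z) u z :=
        le_kelvinTransform_of_exceedanceSet_eq_empty
          (h.exceedanceSet_eq_empty hu (by positivity) hRo) hz
    _ = 2 ^ (k / 2) * u y := by
        rw [kelvinTransform, hinv, hzc, mul_div_cancel_right₀ _ hd.ne', Real.sqrt_eq_rpow,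
          ← Real.rpow_mul zero_le_two, one_div_mul_eq_div]

theorem rpow_neg_mul_rpow_mul_measureReal_le (h : IsCriticalSolution μ k p o u) (hx : x ≠ o)
    {m : ℝ} (hm : 0 ≤ m) (hmu : ∀ y ∈ ball x r, m ≤ u y) :
    r ^ (-k) * m ^ p * μ.real (ball x r) ≤ u x := by
  have hint := h.integrable hx
  calc r ^ (-k) * m ^ p * μ.real (ball x r)
      = ∫ _ in ball x r, r ^ (-k) * m ^ p ∂μ := by
        rw [setIntegral_const, smul_eq_mul, mul_comm]
    _ ≤ ∫ y in ball x r, rieszKernel k x y * u y ^ p ∂μ := by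
        refine integral_mono_ae (integrableOn_const measure_ball_lt_top.ne) hint.integrableOn ?_
        filter_upwards [ae_restrict_mem_sdiff_of_countable measurableSet_ball
          (countable_singleton x)] with y ⟨hy, hyx⟩
        have hkernel : r ^ (-k) ≤ rieszKernel k x y :=
          Real.rpow_le_rpow_of_nonpos (dist_pos.2 (Ne.symm hyx)) (le_of_lt (mem_ball'.1 hy))
            (neg_nonpos.2 h.k_pos.le)
        exact mul_le_mul hkernel (Real.rpow_le_rpow hm (hmu y hy) h.p_pos.le)
          (by positivity) (rieszKernel_nonneg k x y)
    _ ≤ ∫ y, rieszKernel k x y * u y ^ p ∂μ :=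
        setIntegral_le_integral hint <| ae_of_all _ fun y ↦
          mul_nonneg (rieszKernel_nonneg k x y) (Real.rpow_nonneg (h.pos y).le p)
    _ = u x := (h.eq_integral x hx).symm

theorem measureReal_unitBall_div_mul_rpow_le_one (h : IsCriticalSolution μ k p o u)
    (hu : IsSingularAt u o) (hx : x ≠ o) :
    μ.real (ball 0 1) / (2 ^ (k / 2)) ^ p * ((dist x o / 4) ^ (k / 2) * u x) ^ (p - 1) ≤ 1 := by
  have hux := h.pos x
  have hd := dist_pos.2 hx
  set r := dist x o / 4
  have hr : 0 < r := by positivity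
  have hlower : r ^ (-k) * (u x / 2 ^ (k / 2)) ^ p * μ.real (ball x r) ≤ u x :=
    h.rpow_neg_mul_rpow_mul_measureReal_le hx (by positivity) fun y hy ↦
      (div_le_iff₀' (by positivity)).2 (h.le_two_rpow_mul hu hy)
  have hball : μ.real (ball x r) = r ^ (finrank ℝ E : ℝ) * μ.real (ball 0 1) := by
    rw [Measure.real, Measure.addHaar_ball μ x hr.le, ENNReal.toReal_mul,
      ENNReal.toReal_ofReal (by positivity), Real.rpow_natCast, Measure.real]
  have hexponent : r ^ (-k) * r ^ (finrank ℝ E : ℝ) = (r ^ (k / 2)) ^ (p - 1) := by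
    rw [← Real.rpow_add hr, ← Real.rpow_mul hr.le]
    congr 1
    linarith [h.k_add_k_mul_p]
  refine le_of_mul_le_mul_right ?_ hux
  calc μ.real (ball 0 1) / (2 ^ (k / 2)) ^ p * (r ^ (k / 2) * u x) ^ (p - 1) * u x
      = r ^ (-k) * (u x / 2 ^ (k / 2)) ^ p * μ.real (ball x r) := by
        rw [Real.mul_rpow (by positivity) hux.le, ← hexponent, Real.rpow_sub_one hux.ne',
          Real.div_rpow hux.le (by positivity), hball]
        field_simp
    _ ≤ 1 * u x := hlower.trans_eq (one_mul _).symm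

theorem exists_le_mul_dist_rpow (h : IsCriticalSolution μ k p o u) (hu : IsSingularAt u o) :
    ∃ C > 0, ∀ x ≠ o, u x ≤ C * dist x o ^ (-(k / 2)) := by
  set ω := μ.real (ball (0 : E) 1)
  have hω : 0 < ω := ENNReal.toReal_pos (measure_ball_pos μ 0 one_pos).ne' measure_ball_lt_top.ne
  refine ⟨(ω / (2 ^ (k / 2)) ^ p)⁻¹ ^ (p - 1)⁻¹ * 4 ^ (k / 2), by positivity, fun x hx ↦ ?_⟩
  have hd := dist_pos.2 hx
  refine (le_rpow_inv_div_of_mul_rpow_mul_le (by positivity) (sub_pos.2 h.one_lt_p)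
    (by positivity) (h.pos x).le (h.measureReal_unitBall_div_mul_rpow_le_one hu hx)).trans_eq ?_
  rw [Real.div_rpow hd.le (by positivity), Real.rpow_neg hd.le, div_div_eq_mul_div, div_eq_mul_inv]

end Measure

end IsCriticalSolution

end CriticalSolution

theorem upper_bound_of_singular_solution_critical_general {E : Type*} [NormedAddCommGroup E]
    [InnerProductSpace ℝ E] [FiniteDimensional ℝ E] [MeasurableSpace E] [BorelSpace E]
    {μ : Measure E} [μ.IsAddHaarMeasure] {α : ℝ} (hα0 : 0 < α) (hαn : α < finrank ℝ E)
    {x0 : E} {u : E → ℝ} (hpos : ∀ x, 0 < u x) (hcont : ContinuousOn u {x0}ᶜ)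
    (hsing : ∀ ε > (0 : ℝ), ∀ M : ℝ, ∃ x ∈ ball x0 ε, M < u x)
    (heq : ∀ x ≠ x0, u x = ∫ y, ‖x - y‖ ^ (-(finrank ℝ E - α)) *
      u y ^ ((finrank ℝ E + α) / (finrank ℝ E - α)) ∂μ) :
    ∃ C > (0 : ℝ), ∀ x ≠ x0, u x ≤ C * ‖x - x0‖ ^ (-((finrank ℝ E - α) / 2)) := by
  have hk : 0 < finrank ℝ E - α := sub_pos.2 hαn
  have : Nontrivial E := Module.nontrivial_of_finrank_pos (R := ℝ) (by exact_mod_cast hα0.trans hαn)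
  simp only [← dist_eq_norm] at heq ⊢
  have hsol : IsCriticalSolution μ (finrank ℝ E - α)
      ((finrank ℝ E + α) / (finrank ℝ E - α)) x0 u :=
    { k_pos := hk
      k_lt := sub_lt_self _ hα0
      k_add_k_mul_p := by
        rw [mul_div_cancel₀ _ hk.ne']
        ring
      pos := hpos
      continuousOn := hcont
      eq_integral := heq }
  exact hsol.exists_le_mul_dist_rpow hsing

end

/-- A singular solution of the critical integral equation satisfies the upper
bound `u(x) ≤ C |x - x₀|^{-(n-α)/2}`. -/
theorem upper_bound_of_singular_solution_critical
    (n : ℕ) (hn : 0 < n) (α : ℝ) (hα0 : 0 < α) (hαn : α < n)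
    (x0 : EuclideanSpace ℝ (Fin n)) (u : EuclideanSpace ℝ (Fin n) → ℝ)
    (hpos : ∀ x, 0 < u x)
    (hcont : ContinuousOn u {x0}ᶜ)
    (hsing : ∀ ε > (0 : ℝ), ∀ M : ℝ, ∃ x ∈ Metric.ball x0 ε, M < u x)
    (heq : ∀ x ≠ x0, u x = ∫ y : EuclideanSpace ℝ (Fin n),
      ‖x - y‖ ^ (-((n : ℝ) - α)) * u y ^ (((n : ℝ) + α) / ((n : ℝ) - α))) :
    ∃ C > (0 : ℝ), ∀ x ≠ x0, u x ≤ C * ‖x - x0‖ ^ (-(((n : ℝ) - α) / 2)) := by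
  simpa only [finrank_euclideanSpace_fin] using
    upper_bound_of_singular_solution_critical_general (μ := volume) hα0
      (by rwa [finrank_euclideanSpace_fin]) hpos hcont hsing
      (by simpa only [finrank_euclideanSpace_fin] using heq)
end

section
/- Let n be a positive integer, 0 < α < n, and p > n/(n−α). Then there exists a constant c > 0 such that the function u(x) = c |x|^{−α/(p−1)} satisfies u(x) = ∫_{ℝⁿ} |x−y|^{−(n−α)} u(y)^p dy for every x ≠ 0. -/
open MeasureTheory

/-!
The Riesz potential of `‖·‖ ^ (-b)` converges away from the origin when `α < b < n`, is invariant
under rotations and homogeneous of degree `α - b`, so it equals `C * ‖x‖ ^ (α - b)` with `C > 0`.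
For `q = α / (p - 1)` one has `q * p = q + α`, hence `u = c * ‖·‖ ^ (-q)` solves `u = I (u ^ p)` as
soon as `c ^ p * C = c`; the condition `n / (n - α) < p` is exactly `q + α < n`.
-/

open Module Set

section RealPowers

lemma exists_pos_rpow_mul_eq_self {p C : ℝ} (hp : p ≠ 1) (hC : 0 < C) :
    ∃ c > 0, c ^ p * C = c := by
  have hp' : 1 - p ≠ 0 := sub_ne_zero.2 hp.symm
  refine ⟨C ^ (1 - p)⁻¹, by positivity, ?_⟩
  rw [← Real.rpow_mul hC.le, ← Real.rpow_add_one hC.ne']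
  congr 1
  field_simp
  ring

lemma one_lt_of_div_sub_lt {d α p : ℝ} (hα : 0 < α) (hαd : α < d) (hp : d / (d - α) < p) :
    1 < p :=
  ((one_lt_div (sub_pos.2 hαd)).2 (sub_lt_self d hα)).trans hp

lemma div_sub_one_mul_self (α : ℝ) {p : ℝ} (hp : p ≠ 1) :
    α / (p - 1) * p = α / (p - 1) + α := by
  have hp' : p - 1 ≠ 0 := sub_ne_zero.2 hp
  field_simp
  ring

lemma div_sub_one_lt_sub {d α p : ℝ} (hα : 0 < α) (hαd : α < d) (hp : d / (d - α) < p) :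
    α / (p - 1) < d - α := by
  rw [div_lt_iff₀ (sub_pos.2 (one_lt_of_div_sub_lt hα hαd hp))]
  have hp' : d < p * (d - α) := (div_lt_iff₀ (sub_pos.2 hαd)).1 hp
  linarith

lemma rpow_neg_mul_rpow_neg_le {a b r s t : ℝ} (hb : 0 ≤ b) (hr : 0 < r) (hs : 0 ≤ s)
    (hst : s ≤ t) (hrst : r ≤ s + t) :
    s ^ (-a) * t ^ (-b) ≤ 3 ^ b * (s ^ (-a) * (r + s) ^ (-b)) := by
  have ht : t ^ (-b) ≤ 3 ^ b * (r + s) ^ (-b) := calc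
    t ^ (-b) ≤ ((r + s) / 3) ^ (-b) :=
      Real.rpow_le_rpow_of_nonpos (by positivity) (by linarith) (neg_nonpos.2 hb)
    _ = 3 ^ b * (r + s) ^ (-b) := by
      rw [Real.div_rpow (by positivity) (by norm_num), Real.rpow_neg zero_le_three,
        div_inv_eq_mul, mul_comm]
  calc s ^ (-a) * t ^ (-b) ≤ s ^ (-a) * (3 ^ b * (r + s) ^ (-b)) := by gcongr
    _ = 3 ^ b * (s ^ (-a) * (r + s) ^ (-b)) := mul_left_comm _ _ _

lemma integrableOn_Ioi_rpow_mul_add_rpow_neg {s b r : ℝ} (hs : 0 < s) (hsb : s < b) (hr : 0 < r) :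
    IntegrableOn (fun t : ℝ ↦ t ^ (s - 1) * (r + t) ^ (-b)) (Ioi 0) := by
  have hcont : ContinuousOn (fun t : ℝ ↦ (r + t) ^ (-b)) (Ici 0) := fun t (ht : 0 ≤ t) ↦
    ((continuousAt_const.add continuousAt_id).rpow_const
      (Or.inl (add_pos_of_pos_of_nonneg hr ht).ne')).continuousWithinAt
  refine mellin_convergent_of_isBigO_scalar (a := b) (b := 0)
    ((hcont.mono Ioi_subset_Ici_self).locallyIntegrableOn measurableSet_Ioi) ?_ hsb ?_ hs
  · refine Asymptotics.IsBigO.of_bound' ?_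
    filter_upwards [Filter.eventually_gt_atTop 0] with t ht
    rw [Real.norm_of_nonneg (by positivity), Real.norm_of_nonneg (by positivity)]
    exact Real.rpow_le_rpow_of_nonpos ht (by linarith) (by linarith)
  · simp only [neg_zero, Real.rpow_zero]
    exact ((hcont 0 self_mem_Ici).mono Ioi_subset_Ici_self).isBigO_one ℝ

end RealPowers

section NormPowers

variable {E : Type*} [NormedAddCommGroup E] [NormedSpace ℝ E] [FiniteDimensional ℝ E]
  [MeasurableSpace E] [BorelSpace E] (μ : Measure E) [μ.IsAddHaarMeasure]

lemma integrable_norm_rpow_mul_add_norm_rpow [Nontrivial E] {a b r : ℝ}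
    (ha : a < finrank ℝ E) (hab : finrank ℝ E < a + b) (hr : 0 < r) :
    Integrable (fun y : E ↦ ‖y‖ ^ (-a) * (r + ‖y‖) ^ (-b)) μ := by
  rw [integrable_fun_norm_addHaar μ (f := fun t : ℝ ↦ t ^ (-a) * (r + t) ^ (-b))]
  refine (integrableOn_Ioi_rpow_mul_add_rpow_neg (s := finrank ℝ E - a) (b := b)
    (by linarith) (by linarith) hr).congr_fun (fun t (ht : 0 < t) ↦ ?_) measurableSet_Ioi
  simp only [smul_eq_mul]
  rw [← mul_assoc, ← Real.rpow_natCast, ← Real.rpow_add ht, Nat.cast_pred finrank_pos]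
  ring_nf

lemma integrable_norm_sub_rpow_mul_norm_rpow {a b : ℝ} (ha : a < finrank ℝ E)
    (hb : b < finrank ℝ E) (hab : finrank ℝ E < a + b) {x : E} (hx : x ≠ 0) :
    Integrable (fun y ↦ ‖x - y‖ ^ (-a) * ‖y‖ ^ (-b)) μ := by
  have : Nontrivial E := nontrivial_of_ne x 0 hx
  have hxpos : 0 < ‖x‖ := norm_pos_iff.2 hx
  have hnear_x := ((integrable_norm_rpow_mul_add_norm_rpow μ ha hab hxpos).comp_sub_left
    x).const_mul (3 ^ b)
  have hnear_zero := (integrable_norm_rpow_mul_add_norm_rpow μ hb (by linarith : _ < b + a)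
    hxpos).const_mul (3 ^ a)
  refine (hnear_x.add hnear_zero).mono' (by fun_prop) (.of_forall fun y ↦ ?_)
  have htri : ‖x‖ ≤ ‖x - y‖ + ‖y‖ := by simpa using norm_add_le (x - y) y
  rw [Real.norm_of_nonneg (by positivity), Pi.add_apply]
  rcases le_total ‖x - y‖ ‖y‖ with hle | hle
  · exact le_add_of_le_of_nonneg
      (rpow_neg_mul_rpow_neg_le (by linarith) hxpos (norm_nonneg _) hle htri) (by positivity)
  · rw [mul_comm (‖x - y‖ ^ (-a))]
    exact le_add_of_nonneg_of_le (by positivity)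
      (rpow_neg_mul_rpow_neg_le (by linarith) hxpos (norm_nonneg _) hle (by linarith))

end NormPowers

section RieszPotential

variable {E : Type*} [NormedAddCommGroup E] [NormedSpace ℝ E] [MeasurableSpace E]

/-- The Riesz potential of order `α` of `f` with respect to `μ`, without the customary
normalising constant. As a Bochner integral it is `0` wherever it diverges. -/
noncomputable def rieszPotential (μ : Measure E) (α : ℝ) (f : E → ℝ) (x : E) : ℝ :=
  ∫ y, ‖x - y‖ ^ (-((finrank ℝ E : ℝ) - α)) * f y ∂μ

lemma rieszPotential_const_mul (μ : Measure E) (α c : ℝ) (f : E → ℝ) (x : E) :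
    rieszPotential μ α (fun y ↦ c * f y) x = c * rieszPotential μ α f x := by
  simp only [rieszPotential, mul_left_comm _ c, integral_const_mul]

variable [BorelSpace E] [FiniteDimensional ℝ E] (μ : Measure E) [μ.IsAddHaarMeasure]

lemma rieszPotential_comp_smul (α : ℝ) (f : E → ℝ) (x : E) {r : ℝ} (hr : 0 < r) :
    rieszPotential μ α (fun y ↦ f (r • y)) x = r ^ (-α) * rieszPotential μ α f (r • x) := by
  have hkernel (y : E) : ‖x - y‖ ^ (-((finrank ℝ E : ℝ) - α)) * f (r • y) =
      r ^ ((finrank ℝ E : ℝ) - α) *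
        (‖r • x - r • y‖ ^ (-((finrank ℝ E : ℝ) - α)) * f (r • y)) := by
    rw [← smul_sub, norm_smul, Real.norm_of_nonneg hr.le, Real.mul_rpow hr.le (norm_nonneg _),
      Real.rpow_neg hr.le, mul_assoc, mul_inv_cancel_left₀ (by positivity)]
  have hexponent : r ^ (-α) = r ^ ((finrank ℝ E : ℝ) - α) * (r ^ finrank ℝ E)⁻¹ := by
    rw [← Real.rpow_natCast, ← Real.rpow_neg hr.le, ← Real.rpow_add hr]
    ring_nf
  simp only [rieszPotential, hkernel]
  rw [integral_const_mul, μ.integral_comp_smul_of_nonneg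
    (fun y ↦ ‖r • x - y‖ ^ (-((finrank ℝ E : ℝ) - α)) * f y) r (hR := hr.le), smul_eq_mul,
    hexponent, mul_assoc]

lemma rieszPotential_norm_rpow_smul (α b : ℝ) (x : E) {r : ℝ} (hr : 0 < r) :
    rieszPotential μ α (fun y ↦ ‖y‖ ^ (-b)) (r • x) =
      r ^ (α - b) * rieszPotential μ α (fun y ↦ ‖y‖ ^ (-b)) x := by
  have hscale := rieszPotential_comp_smul μ α (fun y ↦ ‖y‖ ^ (-b)) x hr
  simp only [norm_smul, Real.norm_of_nonneg hr.le, Real.mul_rpow hr.le (norm_nonneg _),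
    rieszPotential_const_mul] at hscale
  rw [sub_eq_add_neg, Real.rpow_add hr, mul_assoc, hscale, ← mul_assoc, ← Real.rpow_add hr,
    add_neg_cancel, Real.rpow_zero, one_mul]

lemma rieszPotential_norm_rpow_pos {α b : ℝ} (hα : 0 < α) (hαb : α < b) (hb : b < finrank ℝ E)
    {x : E} (hx : x ≠ 0) : 0 < rieszPotential μ α (fun y ↦ ‖y‖ ^ (-b)) x := by
  have : Nontrivial E := nontrivial_of_ne x 0 hx
  refine (integral_pos_iff_support_of_nonneg (fun y ↦ by positivity)
    (integrable_norm_sub_rpow_mul_norm_rpow μ (by linarith) hb (by linarith) hx)).2 ?_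
  have hsupport : ({x, 0} : Set E)ᶜ ⊆ Function.support
      (fun y ↦ ‖x - y‖ ^ (-((finrank ℝ E : ℝ) - α)) * ‖y‖ ^ (-b)) := by
    intro y hy
    simp only [mem_compl_iff, mem_insert_iff, mem_singleton_iff, not_or] at hy
    have hxy : 0 < ‖x - y‖ := norm_pos_iff.2 (sub_ne_zero.2 (Ne.symm hy.1))
    have hy0 : 0 < ‖y‖ := norm_pos_iff.2 hy.2
    exact ne_of_gt (by positivity)
  refine lt_of_lt_of_le ?_ (measure_mono hsupport)
  have : Infinite E := Module.Free.infinite ℝ E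
  exact (toFinite {x, 0}).isClosed.isOpen_compl.measure_pos μ
    (toFinite {x, 0}).infinite_compl.nonempty

end RieszPotential

section InnerProductSpace

variable {E : Type*} [NormedAddCommGroup E] [InnerProductSpace ℝ E]

lemma exists_linearIsometryEquiv_apply_eq {x y : E} (h : ‖x‖ = ‖y‖) :
    ∃ R : E ≃ₗᵢ[ℝ] E, R x = y :=
  ⟨_, Submodule.reflection_sub h⟩

variable [FiniteDimensional ℝ E] [MeasurableSpace E] [BorelSpace E]
  (μ : Measure E) [μ.IsAddHaarMeasure]

lemma measurePreserving_linearIsometryEquiv (R : E ≃ₗᵢ[ℝ] E) : MeasurePreserving R μ μ := by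
  rw [Measure.isAddLeftInvariant_eq_smul μ volume]
  exact R.measurePreserving.smul_measure _

lemma rieszPotential_comp_linearIsometryEquiv (α : ℝ) (f : E → ℝ) (R : E ≃ₗᵢ[ℝ] E) (x : E) :
    rieszPotential μ α (fun y ↦ f (R y)) x = rieszPotential μ α f (R x) := by
  have hchange := (measurePreserving_linearIsometryEquiv μ R).integral_comp
    R.toHomeomorph.measurableEmbedding
    (fun y ↦ ‖R x - y‖ ^ (-((finrank ℝ E : ℝ) - α)) * f y)
  simpa only [rieszPotential, ← map_sub, R.norm_map] using hchange

lemma exists_rieszPotential_norm_rpow_eq {α b : ℝ} (hα : 0 < α) (hαb : α < b)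
    (hb : b < finrank ℝ E) :
    ∃ C > 0, ∀ x : E, x ≠ 0 →
      rieszPotential μ α (fun y ↦ ‖y‖ ^ (-b)) x = C * ‖x‖ ^ (α - b) := by
  have : Nontrivial E := finrank_pos_iff.1 (by exact_mod_cast (hα.trans hαb).trans hb)
  obtain ⟨e, he⟩ := exists_norm_eq E zero_le_one
  have he0 : e ≠ 0 := norm_ne_zero_iff.1 (he ▸ one_ne_zero)
  refine ⟨_, rieszPotential_norm_rpow_pos μ hα hαb hb he0, fun x hx ↦ ?_⟩
  obtain ⟨R, hR⟩ := exists_linearIsometryEquiv_apply_eq (x := ‖x‖ • e) (y := x)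
    (by rw [norm_smul, norm_norm, he, mul_one])
  have hrotate := rieszPotential_comp_linearIsometryEquiv μ α (fun y ↦ ‖y‖ ^ (-b)) R (‖x‖ • e)
  simp only [R.norm_map, hR] at hrotate
  rw [← hrotate, rieszPotential_norm_rpow_smul μ α b e (norm_pos_iff.2 hx), mul_comm]

theorem singular_power_solution_general {α p : ℝ} (hα0 : 0 < α) (hαn : α < finrank ℝ E)
    (hp : (finrank ℝ E : ℝ) / (finrank ℝ E - α) < p) :
    ∃ c > (0 : ℝ), ∀ x : E, x ≠ 0 →
      c * ‖x‖ ^ (-(α / (p - 1))) =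
        rieszPotential μ α (fun y ↦ (c * ‖y‖ ^ (-(α / (p - 1)))) ^ p) x := by
  have hp1 : 1 < p := one_lt_of_div_sub_lt hα0 hαn hp
  have hqp := div_sub_one_mul_self α hp1.ne'
  have hq := div_sub_one_lt_sub hα0 hαn hp
  have hq0 : 0 < α / (p - 1) := div_pos hα0 (sub_pos.2 hp1)
  set q := α / (p - 1)
  obtain ⟨C, hC, hpotential⟩ := exists_rieszPotential_norm_rpow_eq μ (b := q + α) hα0
    (lt_add_of_pos_left α hq0) (lt_sub_iff_add_lt.1 hq)
  obtain ⟨c, hc, hcC⟩ := exists_pos_rpow_mul_eq_self hp1.ne' hC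
  have hpow (y : E) : (c * ‖y‖ ^ (-q)) ^ p = c ^ p * ‖y‖ ^ (-(q + α)) := by
    rw [Real.mul_rpow hc.le (by positivity), ← Real.rpow_mul (norm_nonneg _), neg_mul, hqp]
  refine ⟨c, hc, fun x hx ↦ ?_⟩
  simp only [hpow]
  rw [rieszPotential_const_mul, hpotential x hx, ← mul_assoc, hcC, sub_add_cancel_right]

end InnerProductSpace

/-- For `p > n/(n-α)`, the function `u(x) = c |x|^{-α/(p-1)}` with a suitable
constant `c > 0` is a singular solution of the integral equation. -/
theorem singular_power_solution
    (n : ℕ) (hn : 0 < n) (α p : ℝ) (hα0 : 0 < α) (hαn : α < n)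
    (hp : (n : ℝ) / ((n : ℝ) - α) < p) :
    ∃ c > (0 : ℝ), ∀ x ≠ (0 : EuclideanSpace ℝ (Fin n)),
      c * ‖x‖ ^ (-(α / (p - 1))) =
        ∫ y : EuclideanSpace ℝ (Fin n),
          ‖x - y‖ ^ (-((n : ℝ) - α)) * (c * ‖y‖ ^ (-(α / (p - 1)))) ^ p := by
  rw [← finrank_euclideanSpace_fin (𝕜 := ℝ) (n := n)] at hαn hp
  simpa only [rieszPotential, finrank_euclideanSpace_fin] using
    singular_power_solution_general (E := EuclideanSpace ℝ (Fin n)) volume hα0 hαn hp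
end
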